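/- arXiv:math/0609644 — 3 statements merged into one kernel-verified Lean document; each statement's English description precedes it below -/
import Mathlib

section
/- For all n ≥ 7, the strict inequalities |S_n(3241)| < |S_n(2341)| < |S_n(4231)| hold. -/
/-!
The chain is `|S_n(3241)| < |S_n(4321)| = |S_n(2341)|` together with `|S_n(4321)| < |S_n(4231)|`.

For the first part pass to complements: the patterns become `2314`, `1234` and `3214`, that is, one
of `231`, `123`, `321` followed by a new maximum. Build a permutation by inserting its letters in
increasing order. A new maximum may be inserted precisely where the letters to its left avoid the
pattern of length three. It suffices to follow the prefix up to the rightmost slot that is still to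
be used: it avoids the short pattern, and at each step it receives a new maximum or is replaced by
one of its prefixes.

* For `123` this process depends only on the length of the prefix and on the number of slots whose
  use creates no `123`. This gives a process on pairs of numbers, the labels.
* For `231` the slots obey the same rules, except that a cut may lose more of them. So labels give
  an upper bound, which is strict from `n = 6` on.
* For `321` the process depends only on the ascents of the prefix, which are encoded by a lattice
  path. Labels and lattice paths are tied together by a process on shapes of ballot words: summed
  over all ballot words of a given shape, the number of runs is the same for both.

For the second part, sort permutations by their left-to-right maxima and right-to-left minima. A
class contains at most one permutation avoiding `4321`, since the other entries of such a
permutation increase. It contains at least one avoiding `4231`, namely the lexicographically largest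
member, since exchanging the inner entries of an occurrence of `4231` stays in the class and gives
a larger permutation. For `n ≥ 7` some class contains two.
-/

open Equiv

/-- `π` is a transversal of the Young diagram with row lengths `b` (zero-indexed:
the row at height `h` has `b h` cells, i.e. column `i` (1-indexed `i+1`) lies in that row
iff `(i:ℕ)+1 ≤ b h`). -/
def IsTransversal {n : ℕ} (b : Fin n → ℕ) (π : Equiv.Perm (Fin n)) : Prop :=
  ∀ i : Fin n, (i : ℕ) + 1 ≤ b (π i)

/-- The transversal `π` contains the pattern `τ` inside the Young diagram `b`:
there are columns `f 0 < f 1 < …` whose dots are in the relative order prescribed by `τ`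
and all rows and columns through these dots intersect inside the diagram. -/
def ContainsIn {n k : ℕ} (b : Fin n → ℕ) (π : Equiv.Perm (Fin n))
    (τ : Equiv.Perm (Fin k)) : Prop :=
  ∃ f : Fin k → Fin n, StrictMono f ∧
    (∀ s t : Fin k, τ s < τ t ↔ π (f s) < π (f t)) ∧
    (∀ s t : Fin k, (f s : ℕ) + 1 ≤ b (π (f t)))

/-- `|S_Y(τ)|`: the number of transversals of the Young diagram `b` avoiding `τ` in `Y`. -/
noncomputable def SYcard {n k : ℕ} (b : Fin n → ℕ) (τ : Equiv.Perm (Fin k)) : ℕ :=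
  Nat.card {π : Equiv.Perm (Fin n) // IsTransversal b π ∧ ¬ ContainsIn b π τ}

/-- Classical pattern containment for permutations. -/
def ContainsPat {n k : ℕ} (π : Equiv.Perm (Fin n)) (τ : Equiv.Perm (Fin k)) : Prop :=
  ∃ f : Fin k → Fin n, StrictMono f ∧ ∀ s t : Fin k, τ s < τ t ↔ π (f s) < π (f t)

/-- `|S_n(τ)|`: the number of permutations of length `n` avoiding `τ`. -/
noncomputable def SnCard (n : ℕ) {k : ℕ} (τ : Equiv.Perm (Fin k)) : ℕ :=
  Nat.card {π : Equiv.Perm (Fin n) // ¬ ContainsPat π τ}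

def p123 : Equiv.Perm (Fin 3) := Equiv.refl _
def p213 : Equiv.Perm (Fin 3) :=
  ⟨![1, 0, 2], ![1, 0, 2], by intro x; fin_cases x <;> rfl, by intro x; fin_cases x <;> rfl⟩
def p312 : Equiv.Perm (Fin 3) :=
  ⟨![2, 0, 1], ![1, 2, 0], by intro x; fin_cases x <;> rfl, by intro x; fin_cases x <;> rfl⟩
def p321 : Equiv.Perm (Fin 3) :=
  ⟨![2, 1, 0], ![2, 1, 0], by intro x; fin_cases x <;> rfl, by intro x; fin_cases x <;> rfl⟩

/-- `(σ|τ)`: the block sum with the block of `σ` before and entirely above the block of `τ`. -/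
def blockSum {m k : ℕ} (σ : Equiv.Perm (Fin m)) (τ : Equiv.Perm (Fin k)) :
    Equiv.Perm (Fin (m + k)) :=
  finSumFinEquiv.symm.trans ((((Equiv.sumCongr σ τ).trans
    (Equiv.sumComm (Fin m) (Fin k))).trans finSumFinEquiv).trans
    (finCongr (Nat.add_comm k m)))

/-- `|S_{↘Y}(τ)|`: avoiders whose two leftmost entries are decreasing. -/
noncomputable def SYcardLeftDesc {m k : ℕ} (b : Fin m → ℕ) (τ : Equiv.Perm (Fin k)) : ℕ :=
  Nat.card {π : Equiv.Perm (Fin m) // IsTransversal b π ∧ ¬ ContainsIn b π τ ∧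
    ∀ i j : Fin m, (i : ℕ) = 0 → (j : ℕ) = 1 → π j < π i}

/-- `|S_{↗Y}(τ)|`: avoiders whose two leftmost entries are increasing. -/
noncomputable def SYcardLeftAsc {m k : ℕ} (b : Fin m → ℕ) (τ : Equiv.Perm (Fin k)) : ℕ :=
  Nat.card {π : Equiv.Perm (Fin m) // IsTransversal b π ∧ ¬ ContainsIn b π τ ∧
    ∀ i j : Fin m, (i : ℕ) = 0 → (j : ℕ) = 1 → π i < π j}

/-- `|S^{↘}_Y(τ)|`: avoiders in which the value `m` occurs to the left of the value `m-1`. -/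
noncomputable def SYcardTopDesc {m k : ℕ} (b : Fin m → ℕ) (τ : Equiv.Perm (Fin k)) : ℕ :=
  Nat.card {π : Equiv.Perm (Fin m) // IsTransversal b π ∧ ¬ ContainsIn b π τ ∧
    ∀ u v : Fin m, (u : ℕ) + 1 = m → (v : ℕ) + 2 = m → π⁻¹ u < π⁻¹ v}

/-- `|S^{↗}_Y(τ)|`: avoiders in which the value `m-1` occurs to the left of the value `m`. -/
noncomputable def SYcardTopAsc {m k : ℕ} (b : Fin m → ℕ) (τ : Equiv.Perm (Fin k)) : ℕ :=
  Nat.card {π : Equiv.Perm (Fin m) // IsTransversal b π ∧ ¬ ContainsIn b π τ ∧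
    ∀ u v : Fin m, (u : ℕ) + 1 = m → (v : ℕ) + 2 = m → π⁻¹ v < π⁻¹ u}

def p3241 : Equiv.Perm (Fin 4) :=
  ⟨![2, 1, 3, 0], ![3, 1, 0, 2], by intro x; fin_cases x <;> rfl, by intro x; fin_cases x <;> rfl⟩
def p2341 : Equiv.Perm (Fin 4) :=
  ⟨![1, 2, 3, 0], ![3, 0, 1, 2], by intro x; fin_cases x <;> rfl, by intro x; fin_cases x <;> rfl⟩
def p4231 : Equiv.Perm (Fin 4) :=
  ⟨![3, 1, 2, 0], ![3, 1, 2, 0], by intro x; fin_cases x <;> rfl, by intro x; fin_cases x <;> rfl⟩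

namespace PatternOrder

section Walks

variable {α β : Type*}

/-- The weighted number of walks with `m` steps from `a`: `step a` is the multiset of possible
successors of `a`, and a walk ending in `b` counts with weight `e b`. -/
def walkCount (step : α → Multiset α) (e : α → ℕ) : ℕ → α → ℕ
  | 0, a => e a
  | m + 1, a => ((step a).map (walkCount step e m)).sum

lemma sum_map_le_sum_map_of_rel {R : α → β → Prop} {f : α → ℕ} {g : β → ℕ}
    (hfg : ∀ a b, R a b → f a ≤ g b) {s : Multiset α} {t : Multiset β}
    (h : Multiset.Rel R s t) : (s.map f).sum ≤ (t.map g).sum := by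
  induction h with
  | zero => rfl
  | cons hab _ ih =>
    rw [Multiset.map_cons, Multiset.map_cons, Multiset.sum_cons, Multiset.sum_cons]
    exact add_le_add (hfg _ _ hab) ih

theorem walkCount_le_of_rel {step : α → Multiset α} {e : α → ℕ} {step' : β → Multiset β}
    {e' : β → ℕ} (R : α → β → Prop) (he : ∀ a b, R a b → e a ≤ e' b)
    (hstep : ∀ a b, R a b → ∃ t ≤ step' b, Multiset.Rel R (step a) t) (m : ℕ) :
    ∀ a b, R a b → walkCount step e m a ≤ walkCount step' e' m b := by
  induction m with
  | zero => exact he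
  | succ m ih =>
    intro a b hab
    obtain ⟨t, ht, hR⟩ := hstep a b hab
    obtain ⟨u, hu⟩ := Multiset.le_iff_exists_add.1 ht
    calc ((step a).map (walkCount step e m)).sum
        ≤ (t.map (walkCount step' e' m)).sum := sum_map_le_sum_map_of_rel ih hR
      _ ≤ ((step' b).map (walkCount step' e' m)).sum := by
        rw [hu, Multiset.map_add, Multiset.sum_add]
        exact Nat.le_add_right _ _

theorem walkCount_eq_of_rel {step : α → Multiset α} {e : α → ℕ} {step' : β → Multiset β}
    {e' : β → ℕ} (R : α → β → Prop) (he : ∀ a b, R a b → e a = e' b)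
    (hstep : ∀ a b, R a b → Multiset.Rel R (step a) (step' b)) (m : ℕ) {a : α} {b : β}
    (hab : R a b) : walkCount step e m a = walkCount step' e' m b :=
  le_antisymm
    (walkCount_le_of_rel R (fun a b h => (he a b h).le) (fun a b h => ⟨_, le_rfl, hstep a b h⟩)
      m a b hab)
    (walkCount_le_of_rel (flip R) (fun b a h => (he a b h).ge)
      (fun b a h => ⟨_, le_rfl, Multiset.rel_flip.2 (hstep a b h)⟩) m b a hab)

theorem walkCount_eq_sum_map {step : α → Multiset α} {e : α → ℕ} {step' : β → Multiset β}
    {e' : β → ℕ} (A : α → Multiset β) (he : ∀ a, e a = ((A a).map e').sum)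
    (hstep : ∀ a, (step a).bind A = (A a).bind step') (m : ℕ) (a : α) :
    walkCount step e m a = ((A a).map (walkCount step' e' m)).sum := by
  induction m generalizing a with
  | zero => exact he a
  | succ m ih =>
    calc ((step a).map (walkCount step e m)).sum
        = (((step a).bind A).map (walkCount step' e' m)).sum := by
          rw [Multiset.map_bind, Multiset.sum_bind, Multiset.map_congr rfl fun b _ => ih b]
      _ = ((A a).map (walkCount step' e' (m + 1))).sum := by
          rw [hstep, Multiset.map_bind, Multiset.sum_bind]
          rfl

end Walks

section Splits

variable {α : Type*}

/-- The slots of the word `w`: all pairs `p` of words with `p.1 ++ p.2 = w`. -/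
def splits : List α → Multiset (List α × List α)
  | [] => {([], [])}
  | x :: w => ([], x :: w) ::ₘ (splits w).map fun p => (x :: p.1, p.2)

lemma append_of_mem_splits {w : List α} {p : List α × List α} (hp : p ∈ splits w) :
    p.1 ++ p.2 = w := by
  induction w generalizing p with
  | nil => simp_all [splits]
  | cons x w ih =>
    rcases Multiset.mem_cons.1 hp with rfl | hp
    · rfl
    · obtain ⟨q, hq, rfl⟩ := Multiset.mem_map.1 hp
      rw [List.cons_append, ih hq]

lemma map_fst_splits (w : List α) : (splits w).map Prod.fst = (w.inits : Multiset _) := by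
  induction w with
  | nil => rfl
  | cons x w ih =>
    simp only [splits, Multiset.map_cons, Multiset.map_map, Function.comp_def, List.inits_cons,
      ← Multiset.cons_coe, ← Multiset.map_coe, ← ih]

lemma bind_splits_map_inits (u : List α) :
    ((splits u).bind fun p => (p.2.inits : Multiset _).map fun t => (p.1, t)) =
      (u.inits : Multiset _).bind splits := by
  induction u with
  | nil => simp [splits]
  | cons x u ih =>
    have h := congrArg (Multiset.map fun p : List α × List α => (x :: p.1, p.2)) ih
    simp only [Multiset.map_bind, Multiset.map_map, Function.comp_apply] at h
    simp only [splits, List.inits_cons, Multiset.cons_bind, Multiset.bind_map, ← Multiset.cons_coe,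
      ← Multiset.map_coe, Multiset.map_cons, Multiset.map_map, Multiset.bind_cons,
      Function.comp_apply, h, Multiset.singleton_add]
    rw [Multiset.cons_add]

end Splits

section Growth

variable {α β : Type*} {ok : List α → Prop} [DecidablePred ok]

lemma bind_filter_of_forall_eq_zero {s : Multiset α} {p : α → Prop} [DecidablePred p]
    {f : α → Multiset β} (h : ∀ a, ¬ p a → f a = 0) : (s.filter p).bind f = s.bind f := by
  rw [Multiset.bind_filter]
  exact Multiset.bind_congr fun a _ => ite_eq_left_iff.2 fun ha => (h a ha).symm

/-- The words obtained by inserting the letter `a` into `w`. -/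
def insertions (a : α) (w : List α) : Multiset (List α) :=
  (splits w).map fun p => p.1 ++ a :: p.2

lemma inits_append_cons (x y : List α) (a : α) :
    ((x ++ a :: y).inits : Multiset _) =
      (x.inits : Multiset _) + (y.inits : Multiset _).map fun t => x ++ a :: t := by
  simp [List.inits_append, Function.comp_def]

/-- An admissible prefix of a word obtained by inserting `a` into `u` either ends before `a` or is
obtained by inserting `a` into a prefix of `u`. -/
lemma bind_filter_inits_insert (hok : ∀ v w : List α, v.Sublist w → ok w → ok v) (a : α)
    (u : List α) :
    (((splits u).filter fun p => ok p.1).bind fun p =>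
        ((p.1 ++ a :: p.2).inits : Multiset _).filter ok) =
      ((u.inits : Multiset _).filter ok).bind fun v =>
        (insertions a v).filter ok + (v.inits : Multiset _) := by
  have hleft : (((splits u).filter fun p => ok p.1).bind fun p =>
      (p.1.inits : Multiset _).filter ok) =
        ((u.inits : Multiset _).filter ok).bind fun v => (v.inits : Multiset _) := by
    rw [← map_fst_splits, Multiset.filter_map, Multiset.bind_map]
    refine Multiset.bind_congr fun p hp => Multiset.filter_eq_self.2 fun v hv => ?_
    exact hok _ _ ((List.mem_inits _ _).1 hv).sublist (Multiset.mem_filter.1 hp).2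
  have hright : (((splits u).filter fun p => ok p.1).bind fun p =>
      ((p.2.inits : Multiset _).map fun t => p.1 ++ a :: t).filter ok) =
        ((u.inits : Multiset _).filter ok).bind fun v => (insertions a v).filter ok := by
    rw [bind_filter_of_forall_eq_zero, bind_filter_of_forall_eq_zero]
    · have h := congrArg (fun s => (s.map fun p => p.1 ++ a :: p.2).filter ok)
        (bind_splits_map_inits u)
      simpa only [Multiset.map_bind, Multiset.map_map, Function.comp_apply,
        Multiset.filter_bind, insertions] using h
    · refine fun v hv => Multiset.filter_eq_nil.2 fun w hw hokw => hv ?_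
      obtain ⟨p, hp, rfl⟩ := Multiset.mem_map.1 hw
      rw [← append_of_mem_splits hp]
      exact hok _ _ ((List.sublist_cons_self _ _).append_left _) hokw
    · refine fun p hp => Multiset.filter_eq_nil.2 fun w hw hokw => hp ?_
      obtain ⟨t, -, rfl⟩ := Multiset.mem_map.1 hw
      exact hok _ _ (List.sublist_append_left _ _) hokw
  simp only [inits_append_cons, Multiset.filter_add, Multiset.bind_add, hleft, hright, add_comm]

end Growth

section Processes

variable (ok : List ℕ → Prop) [DecidablePred ok]

/-- The growth of a word: in the state `(N, u)` the letter `N` is inserted into `u` behind an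
admissible prefix. -/
def growthStep (s : ℕ × List ℕ) : Multiset (ℕ × List ℕ) :=
  ((splits s.2).filter fun p => ok p.1).map fun p => (s.1 + 1, p.1 ++ s.1 :: p.2)

/-- The process followed by a single admissible prefix `w` of the growing word: in the state
`(N, w)` either the letter `N` is inserted into `w`, or `w` is replaced by one of its prefixes,
possibly by itself. -/
def prefixStep (s : ℕ × List ℕ) : Multiset (ℕ × List ℕ) :=
  ((insertions s.1 s.2).filter ok + (s.2.inits : Multiset _)).map (Prod.mk (s.1 + 1))

/-- The number of ways to shrink the prefix `w` to the empty word in `m` steps of `prefixStep`,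
starting with the letter `N`. -/
def prefixCount (m N : ℕ) (w : List ℕ) : ℕ :=
  walkCount (prefixStep ok) (fun s => if s.2 = [] then 1 else 0) m (N, w)

theorem walkCount_growthStep (hnil : ok []) (hok : ∀ v w : List ℕ, v.Sublist w → ok w → ok v)
    (m N : ℕ) : walkCount (growthStep ok) (fun _ => 1) m (N, []) = prefixCount ok m N [] := by
  have hA := walkCount_eq_sum_map (step := growthStep ok) (e := fun _ => 1)
    (step' := prefixStep ok) (e' := fun s => if s.2 = [] then 1 else 0)
    (fun s => ((s.2.inits : Multiset _).filter ok).map (Prod.mk s.1)) ?_ ?_ m (N, [])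
  · simpa [Multiset.filter_singleton, hnil, prefixCount] using hA
  · rintro ⟨N, u⟩
    cases u with
    | nil => simp [Multiset.filter_singleton, hnil]
    | cons x u => simp [hnil, Function.comp_def, List.filter_map]
  · rintro ⟨N, u⟩
    have h := congrArg (Multiset.map (Prod.mk (N + 1))) (bind_filter_inits_insert hok N u)
    simpa only [growthStep, prefixStep, Multiset.map_bind, Multiset.bind_map] using h

end Processes

section Avoidance

variable {α : Type*} {P : α → α → α → Prop}

/-- No subsequence `a, b, c` of `w` satisfies `P a b c`. -/
def Avoids (P : α → α → α → Prop) (w : List α) : Prop := w.Triplewise fun a b c => ¬ P a b c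

instance [h : ∀ a b c, Decidable (P a b c)] : DecidablePred (Avoids P) := by
  intro w
  induction w with
  | nil => exact isTrue .nil
  | cons a w ih =>
    have : Decidable (w.Triplewise fun a b c => ¬ P a b c) := ih
    exact decidable_of_iff _ List.triplewise_cons.symm

lemma avoids_nil : Avoids P [] := .nil

lemma avoids_iff_forall_sublist {w : List α} :
    Avoids P w ↔ ∀ a b c, [a, b, c].Sublist w → ¬ P a b c := by
  induction w with
  | nil => simp [Avoids]
  | cons x w ih =>
    rw [Avoids, List.triplewise_cons, ← Avoids, ih, List.pairwise_iff_forall_sublist]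
    constructor
    · rintro ⟨hx, hw⟩ a b c hs
      rcases List.sublist_cons_iff.1 hs with hs | ⟨r, hr, hs⟩
      · exact hw _ _ _ hs
      · obtain ⟨rfl, rfl⟩ := List.cons_eq_cons.1 hr
        exact hx hs
    · exact fun h => ⟨fun {b c} hs => h x b c (hs.cons_cons x),
        fun a b c hs => h a b c (hs.cons x)⟩

lemma Avoids.sublist (v w : List α) (hvw : v.Sublist w) (hw : Avoids P w) : Avoids P v :=
  avoids_iff_forall_sublist.2 fun _ _ _ hs =>
    avoids_iff_forall_sublist.1 hw _ _ _ (hs.trans hvw)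

lemma avoids_insert {x y : List α} {d : α} :
    Avoids P (x ++ d :: y) ↔ Avoids P (x ++ y) ∧ (x.Pairwise fun a b => ¬ P a b d) ∧
      (y.Pairwise fun a b => ¬ P d a b) ∧ ∀ a ∈ x, ∀ b ∈ y, ¬ P a d b := by
  simp only [Avoids, List.triplewise_append, List.triplewise_cons, List.pairwise_cons,
    List.mem_cons, forall_eq_or_imp, forall_and]
  tauto

variable [LT α]

/-- `l` has a subsequence `a, b, c, d` with `P a b c` and `d` larger than the other three letters:
an occurrence of the pattern `P` followed by a new maximum. -/
def HasTopped (P : α → α → α → Prop) (l : List α) : Prop :=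
  ∃ a b c d, [a, b, c, d].Sublist l ∧ P a b c ∧ a < d ∧ b < d ∧ c < d

/-- A new maximum can only play the role of the last letter of an occurrence. -/
lemma hasTopped_insert {P : ℕ → ℕ → ℕ → Prop} {N : ℕ} {x y : List ℕ}
    (hN : ∀ a ∈ x ++ y, a < N) :
    HasTopped P (x ++ N :: y) ↔ HasTopped P (x ++ y) ∨ ¬ Avoids P x := by
  simp only [avoids_iff_forall_sublist, not_forall, not_not]
  constructor
  · rintro ⟨a, b, c, d, hs, hP, had, hbd, hcd⟩
    have hd : d ≤ N := by
      have hd : d ∈ x ++ N :: y := hs.subset (by simp)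
      grind
    obtain ⟨l₁, l₂, he, hs₁, hs₂⟩ := List.sublist_append_iff.1 hs
    rcases List.sublist_cons_iff.1 hs₂ with hs₂ | ⟨r, rfl, -⟩
    · exact .inl ⟨a, b, c, d, he ▸ hs₁.append hs₂, hP, had, hbd, hcd⟩
    · have hl₁ : l₁ = [a, b, c] := by
        rcases r.eq_nil_or_concat with rfl | ⟨r, e, rfl⟩
        · exact (List.append_inj' (s₁ := [a, b, c]) he rfl).1.symm
        · have hmem : N ∈ [a, b, c] := by
            rw [(List.append_inj' (s₁ := [a, b, c]) (t₁ := [d]) (s₂ := l₁ ++ N :: r)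
              (t₂ := [e]) (by simpa using he) rfl).1]
            simp
          grind
      exact .inr ⟨a, b, c, hl₁ ▸ hs₁, hP⟩
  · rintro (⟨a, b, c, d, hs, h⟩ | ⟨a, b, c, hs, hP⟩)
    · exact ⟨a, b, c, d, hs.trans ((List.sublist_cons_self _ _).append_left _), h⟩
    · have hlt : ∀ z ∈ [a, b, c], z < N := fun z hz => hN z (List.mem_append_left _ (hs.subset hz))
      refine ⟨a, b, c, N, ?_, hP, hlt a (by simp), hlt b (by simp), hlt c (by simp)⟩
      exact hs.append (l₁ := [a, b, c]) ((List.nil_sublist y).cons_cons N)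

end Avoidance

section Arrangements

variable {P : ℕ → ℕ → ℕ → Prop} {n : ℕ}

lemma coe_permutations'Aux {α : Type*} (a : α) (w : List α) :
    (w.permutations'Aux a : Multiset _) = insertions a w := by
  induction w with
  | nil => rfl
  | cons x w ih =>
    have h : (w.permutations'Aux a).map (List.cons x) = (insertions a w).map (List.cons x) := by
      rw [← ih, Multiset.map_coe]
    simpa [insertions, splits, ← Multiset.cons_coe, Function.comp_def] using h

/-- The arrangements of the letters `0, …, n - 1`. -/
def arrangements (n : ℕ) : Multiset (List ℕ) := (List.range n).reverse.permutations'

lemma mem_arrangements {u : List ℕ} : u ∈ arrangements n ↔ u.Perm (List.range n) := by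
  rw [arrangements, Multiset.mem_coe, List.mem_permutations']
  exact (List.reverse_perm _).congr_right _

lemma arrangements_succ (n : ℕ) :
    arrangements (n + 1) = (arrangements n).bind (insertions n) := by
  rw [arrangements, List.range_succ, List.reverse_append]
  simp [arrangements, coe_permutations'Aux, ← Multiset.coe_bind]

lemma lt_of_mem_arrangements {u : List ℕ} (hu : u ∈ arrangements n) : ∀ a ∈ u, a < n :=
  fun _ ha => List.mem_range.1 ((mem_arrangements.1 hu).subset ha)

open Classical in
/-- The arrangements of `0, …, n - 1` that avoid the pattern `P` followed by a new maximum. -/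
noncomputable def toppedAvoiders (P : ℕ → ℕ → ℕ → Prop) (n : ℕ) : Multiset (List ℕ) :=
  (arrangements n).filter fun u => ¬ HasTopped P u

open Classical in
lemma toppedAvoiders_succ (P : ℕ → ℕ → ℕ → Prop) (n : ℕ) :
    toppedAvoiders P (n + 1) = (toppedAvoiders P n).bind fun u =>
      ((splits u).filter fun p => Avoids P p.1).map fun p => p.1 ++ n :: p.2 := by
  rw [toppedAvoiders, arrangements_succ, Multiset.filter_bind, toppedAvoiders, Multiset.bind_filter]
  refine Multiset.bind_congr fun u hu => ?_
  have hiff : ∀ p ∈ splits u,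
      ¬ HasTopped P (p.1 ++ n :: p.2) ↔ ¬ HasTopped P u ∧ Avoids P p.1 := by
    intro p hp
    rw [← append_of_mem_splits hp] at hu ⊢
    rw [hasTopped_insert (lt_of_mem_arrangements hu), not_or, not_not]
  rw [insertions, Multiset.filter_map]
  by_cases hu' : HasTopped P u
  · rw [if_neg (not_not.2 hu'), Multiset.map_eq_zero, Multiset.filter_eq_nil]
    exact fun p hp h => ((hiff p hp).1 h).1 hu'
  · rw [if_pos hu']
    exact congrArg _ (Multiset.filter_congr fun p hp => (hiff p hp).trans (and_iff_right hu'))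

lemma card_toppedAvoiders_add (P : ℕ → ℕ → ℕ → Prop) [DecidablePred (Avoids P)] (m n : ℕ) :
    (toppedAvoiders P (n + m)).card = ((toppedAvoiders P n).map fun u =>
      walkCount (growthStep (Avoids P)) (fun _ => 1) m (n, u)).sum := by
  induction m generalizing n with
  | zero => simp [walkCount]
  | succ m ih =>
    rw [← Nat.succ_add_eq_add_succ, ih, toppedAvoiders_succ, Multiset.map_bind, Multiset.sum_bind]
    simp only [Multiset.map_map, walkCount, growthStep, Function.comp_def]
    congr!

theorem card_toppedAvoiders (P : ℕ → ℕ → ℕ → Prop) [DecidablePred (Avoids P)] (n : ℕ) :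
    (toppedAvoiders P n).card = prefixCount (Avoids P) n 0 [] := by
  have hzero : toppedAvoiders P 0 = {[]} := by
    classical
    rw [toppedAvoiders, show arrangements 0 = {[]} from rfl, Multiset.filter_eq_self]
    simp [HasTopped]
  have h := card_toppedAvoiders_add P n 0
  rw [zero_add, hzero, Multiset.map_singleton, Multiset.sum_singleton] at h
  exact h.trans (walkCount_growthStep _ avoids_nil Avoids.sublist n 0)

end Arrangements

section Words

/-- The complement `n - 1 - π 0, n - 1 - π 1, …` of `π`, as a word. -/
def word {n : ℕ} (π : Equiv.Perm (Fin n)) : List ℕ := List.ofFn fun i => ((π i).rev : ℕ)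

lemma ofFn_sublist_ofFn_iff {α : Type*} {k n : ℕ} {x : Fin k → α} {g : Fin n → α} :
    (List.ofFn x).Sublist (List.ofFn g) ↔ ∃ f : Fin k → Fin n, StrictMono f ∧ x = g ∘ f := by
  rw [List.sublist_iff_exists_fin_orderEmbedding_get_eq]
  constructor
  · rintro ⟨f, hf⟩
    refine ⟨fun i => Fin.cast List.length_ofFn (f (Fin.cast List.length_ofFn.symm i)),
      fun i j hij => f.strictMono hij, funext fun i => ?_⟩
    have h := hf (Fin.cast List.length_ofFn.symm i)
    rwa [List.get_ofFn, List.get_ofFn] at h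
  · rintro ⟨f, hf, rfl⟩
    refine ⟨OrderEmbedding.ofStrictMono (fun i => Fin.cast List.length_ofFn.symm
      (f (Fin.cast List.length_ofFn i))) fun i j hij => hf hij, fun i => ?_⟩
    rw [List.get_ofFn, List.get_ofFn]
    rfl

lemma word_injective (n : ℕ) : Function.Injective (word (n := n)) := by
  intro π σ h
  ext i
  have := congrFun (List.ofFn_injective h) i
  exact congrArg _ (Fin.rev_injective (Fin.val_injective this))

lemma word_mem_arrangements {n : ℕ} (π : Equiv.Perm (Fin n)) : word π ∈ arrangements n := by
  have hval : List.ofFn (fun i : Fin n => (i : ℕ)) = List.range n := by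
    rw [List.ofFn_eq_map, List.map_coe_finRange_eq_range]
  rw [mem_arrangements, ← hval]
  exact Equiv.Perm.ofFn_comp_perm (π.trans Fin.revPerm) _

lemma map_word_univ (n : ℕ) :
    Finset.univ.val.map (word (n := n)) = arrangements n := by
  refine Multiset.eq_of_le_of_card_le ?_ ?_
  · rw [Multiset.le_iff_subset (Finset.univ.nodup.map (word_injective n))]
    intro u hu
    obtain ⟨π, -, rfl⟩ := Multiset.mem_map.1 hu
    exact word_mem_arrangements π
  · rw [arrangements, Multiset.coe_card, ← (List.permutations_perm_permutations' _).length_eq]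
    simp [List.length_permutations, Fintype.card_perm]

lemma hasTopped_ofFn_iff {α : Type*} [LT α] {P : α → α → α → Prop} {n : ℕ} {g : Fin n → α} :
    HasTopped P (List.ofFn g) ↔ ∃ f : Fin 4 → Fin n, StrictMono f ∧
      P (g (f 0)) (g (f 1)) (g (f 2)) ∧ g (f 0) < g (f 3) ∧ g (f 1) < g (f 3) ∧
        g (f 2) < g (f 3) := by
  constructor
  · rintro ⟨a, b, c, d, hs, hP⟩
    obtain ⟨f, hf, hx⟩ := (ofFn_sublist_ofFn_iff (x := ![a, b, c, d])).1 (by simpa using hs)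
    have hx (i) : g (f i) = ![a, b, c, d] i := (congrFun hx i).symm
    exact ⟨f, hf, by simpa [hx] using hP⟩
  · rintro ⟨f, hf, hP⟩
    have hs := (ofFn_sublist_ofFn_iff (x := g ∘ f)).2 ⟨f, hf, rfl⟩
    exact ⟨_, _, _, _, by simpa [List.ofFn_succ] using hs, by simpa using hP⟩

/-- If the complement of `τ` is the pattern `P` followed by a new maximum, then taking complements
identifies the `τ`-avoiding permutations with the words counted by `toppedAvoiders P n`. -/
theorem SnCard_eq_card_toppedAvoiders {P : ℕ → ℕ → ℕ → Prop} {τ : Equiv.Perm (Fin 4)}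
    (h : ∀ x : Fin 4 → ℕ, Function.Injective x → ((∀ s t, τ s < τ t ↔ x t < x s) ↔
      P (x 0) (x 1) (x 2) ∧ x 0 < x 3 ∧ x 1 < x 3 ∧ x 2 < x 3)) (n : ℕ) :
    SnCard n τ = (toppedAvoiders P n).card := by
  classical
  have hiff (π : Equiv.Perm (Fin n)) : HasTopped P (word π) ↔ ContainsPat π τ := by
    rw [word, hasTopped_ofFn_iff]
    refine exists_congr fun f => and_congr_right fun hf => ?_
    have hinj : Function.Injective fun s => ((π (f s)).rev : ℕ) :=
      Fin.val_injective.comp (Fin.rev_injective.comp (π.injective.comp hf.injective))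
    rw [← h _ hinj]
    simp only [Fin.val_fin_lt, Fin.rev_lt_rev]
  rw [SnCard, Nat.card_eq_fintype_card, Fintype.card_subtype, Finset.card, toppedAvoiders,
    ← map_word_univ, Multiset.filter_map, Multiset.card_map, Finset.filter_val]
  simp only [Function.comp_def, hiff]

end Words

section Patterns

variable {N : ℕ} {x y : List ℕ}

/-- `a, b, c` is an occurrence of `123`. -/
abbrev P123 (a b c : ℕ) : Prop := a < b ∧ b < c

/-- `a, b, c` is an occurrence of `321`. -/
abbrev P321 (a b c : ℕ) : Prop := c < b ∧ b < a

/-- `a, b, c` is an occurrence of `231`. The second inequality is weak, which makes no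
difference for words without repeated letters. -/
abbrev P231 (a b c : ℕ) : Prop := c < a ∧ a ≤ b

/-- The decreasing pattern of length four. -/
def p4321 : Equiv.Perm (Fin 4) := Fin.revPerm

theorem SnCard_p3241 (n : ℕ) : SnCard n p3241 = prefixCount (Avoids P231) n 0 [] := by
  rw [← card_toppedAvoiders]
  refine SnCard_eq_card_toppedAvoiders (fun x hx => ?_) n
  have h01 : x 0 ≠ x 1 := hx.ne (by decide)
  simp only [Fin.forall_fin_succ, P231, p3241]
  simp [Fin.ext_iff]
  omega

theorem SnCard_p2341 (n : ℕ) : SnCard n p2341 = prefixCount (Avoids P321) n 0 [] := by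
  rw [← card_toppedAvoiders]
  refine SnCard_eq_card_toppedAvoiders (fun x _ => ?_) n
  simp only [Fin.forall_fin_succ, P321, p2341]
  simp [Fin.ext_iff]
  omega

theorem SnCard_p4321 (n : ℕ) : SnCard n p4321 = prefixCount (Avoids P123) n 0 [] := by
  rw [← card_toppedAvoiders]
  refine SnCard_eq_card_toppedAvoiders (fun x _ => ?_) n
  simp only [Fin.forall_fin_succ, P123, p4321]
  simp [Fin.ext_iff]
  omega

lemma avoids_P123_insert (hN : ∀ a ∈ x ++ y, a < N) :
    Avoids P123 (x ++ N :: y) ↔ Avoids P123 (x ++ y) ∧ x.Pairwise (· ≥ ·) := by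
  rw [avoids_insert]
  simp only [List.mem_append] at hN
  have hx : x.Pairwise (fun a b => ¬ P123 a b N) ↔ x.Pairwise (· ≥ ·) :=
    List.Pairwise.iff_of_mem (by grind)
  have hy : y.Pairwise fun a b => ¬ P123 N a b := List.pairwise_of_forall_mem_list (by grind)
  grind

lemma avoids_P321_insert (hN : ∀ a ∈ x ++ y, a < N) :
    Avoids P321 (x ++ N :: y) ↔ Avoids P321 (x ++ y) ∧ y.Pairwise (· ≤ ·) := by
  rw [avoids_insert]
  simp only [List.mem_append] at hN
  have hx : x.Pairwise fun a b => ¬ P321 a b N := List.pairwise_of_forall_mem_list (by grind)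
  have hy : y.Pairwise (fun a b => ¬ P321 N a b) ↔ y.Pairwise (· ≤ ·) :=
    List.Pairwise.iff_of_mem (by grind)
  grind

lemma avoids_P231_insert (hN : ∀ a ∈ x ++ y, a < N) :
    Avoids P231 (x ++ N :: y) ↔ Avoids P231 (x ++ y) ∧ ∀ a ∈ x, ∀ b ∈ y, a ≤ b := by
  rw [avoids_insert]
  simp only [List.mem_append] at hN
  have hx : x.Pairwise fun a b => ¬ P231 a b N := List.pairwise_of_forall_mem_list (by grind)
  have hy : y.Pairwise fun a b => ¬ P231 N a b := List.pairwise_of_forall_mem_list (by grind)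
  grind

end Patterns

section Labels

/-- The label process: `(n, j)` stands for a prefix with `n` letters and `j + 1` slots in which the
next letter may be inserted. -/
def labelStep (s : ℕ × ℕ) : Multiset (ℕ × ℕ) :=
  (Multiset.range (s.2 + 1)).map (fun i => (s.1 + 1, i + 1)) +
    (Multiset.range (s.1 + 1)).map fun b => (b, min s.2 b)

/-- The number of walks of `labelStep` with `m` steps from `(n, j)` to a label `(0, i)`. -/
def labelCount (m n j : ℕ) : ℕ := walkCount labelStep (fun s => if s.1 = 0 then 1 else 0) m (n, j)

lemma splits_eq_map_range {α : Type*} (w : List α) :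
    splits w = (Multiset.range (w.length + 1)).map fun c => (w.take c, w.drop c) := by
  induction w with
  | nil => rfl
  | cons x w ih =>
    have hrange : Multiset.range ((x :: w).length + 1) =
        0 ::ₘ (Multiset.range (w.length + 1)).map (· + 1) :=
      congrArg _ List.range_succ_eq_map
    rw [splits, ih, hrange, Multiset.map_cons, Multiset.map_map, Multiset.map_map]
    rfl

lemma inits_eq_map_range {α : Type*} (w : List α) :
    (w.inits : Multiset _) = (Multiset.range (w.length + 1)).map w.take := by
  rw [← map_fst_splits, splits_eq_map_range, Multiset.map_map]
  rfl

lemma prefixStep_eq (ok : List ℕ → Prop) [DecidablePred ok] (N : ℕ) (w : List ℕ) :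
    prefixStep ok (N, w) =
      ((Multiset.range (w.length + 1)).filter fun c => ok (w.take c ++ N :: w.drop c)).map
        (fun c => (N + 1, w.take c ++ N :: w.drop c)) +
      (Multiset.range (w.length + 1)).map fun b => (N + 1, w.take b) := by
  rw [prefixStep, insertions, splits_eq_map_range, inits_eq_map_range, Multiset.map_map,
    Multiset.filter_map, Multiset.map_add, Multiset.map_map, Multiset.map_map]
  rfl

lemma lt_of_mem_insert {N : ℕ} {x y : List ℕ} (hN : ∀ a ∈ x ++ y, a < N) :
    ∀ a ∈ x ++ N :: y, a < N + 1 := by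
  simp only [List.mem_append, List.mem_cons] at hN ⊢
  grind

lemma rel_map_map {ι α β : Type*} {R : α → β → Prop} {s : Multiset ι} {f : ι → α} {g : ι → β}
    (h : ∀ i ∈ s, R (f i) (g i)) : Multiset.Rel R (s.map f) (s.map g) :=
  Multiset.rel_map.2 (Multiset.rel_refl_of_refl_on h)

end Labels

section Labels123

/-- `(N, w)` matches the label `(n, j)`: the slots of `w` in which the letter `N` may be inserted
without creating a `123` are the first `j + 1`. -/
structure Matches (s : ℕ × List ℕ) (t : ℕ × ℕ) : Prop where
  lt : ∀ a ∈ s.2, a < s.1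
  length_eq : s.2.length = t.1
  avoids : Avoids P123 s.2
  le : t.2 ≤ t.1
  pairwise_take_iff : ∀ c ≤ t.1, (s.2.take c).Pairwise (· ≥ ·) ↔ c ≤ t.2

variable {N n j : ℕ} {w : List ℕ}

lemma Matches.take (h : Matches (N, w) (n, j)) {b : ℕ} (hb : b ≤ n) :
    Matches (N + 1, w.take b) (b, min j b) where
  lt a ha := (h.lt a (List.mem_of_mem_take ha)).trans N.lt_succ_self
  length_eq := List.length_take_of_le (hb.trans_eq h.length_eq.symm)
  avoids := h.avoids.sublist _ _ (List.take_sublist _ _)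
  le := min_le_right _ _
  pairwise_take_iff c hc := by
    rw [List.take_take, min_eq_left hc, h.pairwise_take_iff c (hc.trans hb), le_min_iff]
    exact (and_iff_left hc).symm

lemma Matches.insert_zero (h : Matches (N, w) (n, j)) :
    Matches (N + 1, N :: w) (n + 1, j + 1) where
  lt := lt_of_mem_insert (x := []) h.lt
  length_eq := congrArg (· + 1) h.length_eq
  avoids := (avoids_P123_insert (x := []) h.lt).2 ⟨h.avoids, .nil⟩
  le := Nat.succ_le_succ h.le
  pairwise_take_iff c hc := by
    cases c with
    | zero => simp
    | succ c =>
      rw [List.take_succ_cons, List.pairwise_cons, Nat.succ_le_succ_iff,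
        ← h.pairwise_take_iff c (Nat.le_of_succ_le_succ hc)]
      exact and_iff_right fun a ha => (h.lt a (List.mem_of_mem_take ha)).le

lemma Matches.insert_succ (h : Matches (N, w) (n, j)) {c : ℕ} (hc : c + 1 ≤ j) :
    Matches (N + 1, w.take (c + 1) ++ N :: w.drop (c + 1)) (n + 1, c + 1) := by
  have hlt : ∀ a ∈ w.take (c + 1) ++ w.drop (c + 1), a < N := by simpa using h.lt
  have hcn : c + 1 ≤ n := hc.trans h.le
  have hlen : (w.take (c + 1)).length = c + 1 :=
    List.length_take_of_le (hcn.trans_eq h.length_eq.symm)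
  refine ⟨lt_of_mem_insert hlt, ?_, ?_, Nat.succ_le_succ (by omega), fun d hd => ?_⟩
  · have := h.length_eq
    grind
  · rw [avoids_P123_insert hlt, List.take_append_drop]
    exact ⟨h.avoids, (h.pairwise_take_iff _ hcn).2 hc⟩
  · change _ ↔ d ≤ c + 1
    rcases le_or_gt d (c + 1) with hdc | hdc
    · rw [List.take_append_of_le_length (hdc.trans_eq hlen.symm), List.take_take, min_eq_left hdc]
      exact iff_of_true ((h.pairwise_take_iff _ (hdc.trans hcn)).2 (hdc.trans hc)) hdc
    · refine iff_of_false (fun hpair => ?_) hdc.not_ge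
      obtain ⟨e, rfl⟩ := Nat.exists_eq_add_of_lt hdc
      obtain ⟨a, ha⟩ : ∃ a, a ∈ w.take (c + 1) := List.exists_mem_of_length_pos (by omega)
      have hsplit : (w.take (c + 1) ++ N :: w.drop (c + 1)).take (c + 1 + e + 1) =
          w.take (c + 1) ++ N :: (w.drop (c + 1)).take e := by
        rw [List.take_append, hlen, List.take_of_length_le (hlen.trans_le hdc.le), add_assoc,
          Nat.add_sub_cancel_left, List.take_succ_cons]
      rw [hsplit, List.pairwise_append] at hpair
      exact (hpair.2.2 a ha N List.mem_cons_self).not_gt (hlt a (List.mem_append_left _ ha))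

/-- Inserting the next letter in the first slot creates a slot, while inserting it in the slot
`c > 0` leaves that slot and those before it. -/
lemma map_range_add_one (j : ℕ) : (Multiset.range (j + 1)).map (· + 1) =
    (Multiset.range (j + 1)).map fun c => if c = 0 then j + 1 else c := by
  have hrange : Multiset.range (j + 1) = 0 ::ₘ (Multiset.range j).map (· + 1) :=
    congrArg _ List.range_succ_eq_map
  conv_rhs => rw [hrange]
  rw [Multiset.range_succ]
  simp

lemma rel_matches {s : ℕ × List ℕ} {t : ℕ × ℕ} (h : Matches s t) :
    Multiset.Rel Matches (prefixStep (Avoids P123) s) (labelStep t) := by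
  obtain ⟨N, w⟩ := s
  obtain ⟨n, j⟩ := t
  have hw : w.length = n := h.length_eq
  have hslots : (Multiset.range (n + 1)).filter
      (fun c => Avoids P123 (w.take c ++ N :: w.drop c)) = Multiset.range (j + 1) := by
    refine ((Multiset.nodup_range _).filter _).ext (Multiset.nodup_range _) |>.2 fun c => ?_
    rw [Multiset.mem_filter, Multiset.mem_range, Multiset.mem_range, Nat.lt_succ_iff,
      Nat.lt_succ_iff, avoids_P123_insert (by simpa using h.lt), List.take_append_drop]
    refine ⟨fun hc => (h.pairwise_take_iff c hc.1).1 hc.2.2, fun hc => ?_⟩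
    exact ⟨hc.trans h.le, h.avoids, (h.pairwise_take_iff c (hc.trans h.le)).2 hc⟩
  have hlabels := congrArg (Multiset.map (Prod.mk (n + 1))) (map_range_add_one j)
  simp only [Multiset.map_map, Function.comp_def] at hlabels
  rw [prefixStep_eq, hw, hslots, labelStep, hlabels]
  refine (rel_map_map fun c hc => ?_).add
    (rel_map_map fun b hb => h.take (Nat.lt_succ_iff.1 (Multiset.mem_range.1 hb)))
  cases c with
  | zero => exact h.insert_zero
  | succ c => exact h.insert_succ (Nat.lt_succ_iff.1 (Multiset.mem_range.1 hc))

theorem prefixCount_P123_eq (m : ℕ) : prefixCount (Avoids P123) m 0 [] = labelCount m 0 0 := by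
  refine walkCount_eq_of_rel Matches (fun s t hst => ?_) (fun s t => rel_matches) m
    ⟨by simp, rfl, .nil, le_rfl, by simp⟩
  rw [← hst.length_eq]
  simp

end Labels123

section Labels231

lemma map_card_filter_le {α : Type*} [LinearOrder α] (s : Finset α) :
    s.val.map (fun c => (s.filter (· ≤ c)).card) = (Multiset.range s.card).map (· + 1) := by
  induction s using Finset.induction_on_max with
  | empty => rfl
  | insert a s ha ih =>
    have has : a ∉ s := fun h => (ha a h).false
    have hs : ∀ c ∈ s, (insert a s).filter (· ≤ c) = s.filter (· ≤ c) := fun c hc => by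
      rw [Finset.filter_insert, if_neg (ha c hc).not_ge]
    have ha' : (insert a s).filter (· ≤ a) = insert a s :=
      Finset.filter_true_of_mem (by simpa using fun c hc => (ha c hc).le)
    rw [Finset.insert_val_of_notMem has, Multiset.map_cons, ha', Finset.card_insert_of_notMem has,
      Multiset.range_succ, Multiset.map_cons, ← ih]
    exact congrArg _ (Multiset.map_congr rfl fun c hc => by rw [hs c hc])

/-- No letter before the slot `c` of `w` exceeds a letter behind it. -/
abbrev IsCut (w : List ℕ) (c : ℕ) : Prop := ∀ a ∈ w.take c, ∀ b ∈ w.drop c, a ≤ b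

/-- The slots of `w` in which a new maximum creates no `231`. -/
def cuts (w : List ℕ) : Finset ℕ := (Finset.range (w.length + 1)).filter (IsCut w)

variable {N : ℕ} {w x y : List ℕ}

lemma mem_cuts {c : ℕ} : c ∈ cuts w ↔ c ≤ w.length ∧ IsCut w c := by
  rw [cuts, Finset.mem_filter, Finset.mem_range_succ_iff]

lemma length_mem_cuts (w : List ℕ) : w.length ∈ cuts w := by
  simp [mem_cuts, IsCut]

lemma cuts_insert_subset (hN : ∀ a ∈ x ++ y, a < N) :
    cuts (x ++ N :: y) ⊆
      insert ((x ++ y).length + 1) ((cuts (x ++ y)).filter (· ≤ x.length)) := by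
  intro d hd
  simp only [Finset.mem_insert, Finset.mem_filter, mem_cuts] at hd ⊢
  simp only [List.length_append, List.length_cons] at hd ⊢
  obtain ⟨hd, hcut⟩ := hd
  rcases le_or_gt d x.length with hdx | hdx
  · simp only [IsCut, List.take_append_of_le_length hdx,
      List.drop_append_of_le_length hdx] at hcut ⊢
    refine .inr ⟨⟨by omega, fun a ha b hb => ?_⟩, hdx⟩
    rcases List.mem_append.1 hb with hb | hb
    · exact hcut a ha b (List.mem_append_left _ hb)
    · exact hcut a ha b (List.mem_append_right _ (List.mem_cons_of_mem _ hb))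
  · left
    by_contra hne
    obtain ⟨e, rfl⟩ := Nat.exists_eq_add_of_lt hdx
    have hN' : N ∈ (x ++ N :: y).take (x.length + e + 1) := by
      rw [add_assoc, List.take_length_add_append]
      simp
    obtain ⟨b, hb⟩ : ∃ b, b ∈ y.drop e := List.exists_mem_of_ne_nil _ (by simp; omega)
    have hb' : b ∈ (x ++ N :: y).drop (x.length + e + 1) := by
      rw [add_assoc, List.drop_length_add_append]
      simpa using hb
    have := hcut N hN' b hb'
    have := hN b (List.mem_append_right _ (List.mem_of_mem_drop hb))
    omega

lemma isCut_append_of_isCut_left (h : Avoids P231 (x ++ y)) {d : ℕ} (hd : d < x.length)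
    (hcut : IsCut x d) : IsCut (x ++ y) d := by
  simp only [IsCut, List.take_append_of_le_length hd.le, List.drop_append_of_le_length hd.le]
  intro a ha b hb
  rcases List.mem_append.1 hb with hb | hb
  · exact hcut a ha b hb
  · obtain ⟨z, hz⟩ : ∃ z, z ∈ x.drop d := List.exists_mem_of_ne_nil _ (by simpa using hd)
    by_contra hba
    refine avoids_iff_forall_sublist.1 h a z b ?_ ⟨not_le.1 hba, hcut a ha z hz⟩
    rw [← List.take_append_drop d x, List.append_assoc]
    exact (List.singleton_sublist.2 ha).append
      ((List.singleton_sublist.2 hz).append (List.singleton_sublist.2 hb))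

lemma card_cuts_left_le (h : Avoids P231 (x ++ y)) : (cuts x).card ≤ (cuts (x ++ y)).card := by
  have hsub : (cuts x).erase x.length ⊆ (cuts (x ++ y)).erase (x ++ y).length := by
    intro d hd
    simp only [Finset.mem_erase, mem_cuts, List.length_append] at hd ⊢
    have hdx : d < x.length := by omega
    exact ⟨by omega, by omega, isCut_append_of_isCut_left h hdx hd.2.2⟩
  have hcard := Finset.card_le_card hsub
  rw [Finset.card_erase_of_mem (length_mem_cuts x),
    Finset.card_erase_of_mem (length_mem_cuts (x ++ y))] at hcard
  have := Finset.card_pos.2 ⟨_, length_mem_cuts (x ++ y)⟩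
  omega

/-- `(N, w)` is dominated by the label `(n, j)`: the word `w` has at most `j + 1` slots in which the
letter `N` may be inserted without creating a `231`. -/
structure Dominated (s : ℕ × List ℕ) (t : ℕ × ℕ) : Prop where
  lt : ∀ a ∈ s.2, a < s.1
  length_eq : s.2.length = t.1
  avoids : Avoids P231 s.2
  card_le : (cuts s.2).card ≤ t.2 + 1

lemma Dominated.take {N n j b : ℕ} {w : List ℕ} (h : Dominated (N, w) (n, j)) (hb : b ≤ n) :
    Dominated (N + 1, w.take b) (b, min j b) := by
  have hlen : (w.take b).length = b := List.length_take_of_le (hb.trans_eq h.length_eq.symm)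
  refine ⟨fun a ha => (h.lt a (List.mem_of_mem_take ha)).trans N.lt_succ_self, hlen,
    h.avoids.sublist _ _ (List.take_sublist _ _), ?_⟩
  have hle : (cuts (w.take b)).card ≤ (cuts w).card := by
    simpa using card_cuts_left_le (x := w.take b) (y := w.drop b) (by simpa using h.avoids)
  have hle' : (cuts (w.take b)).card ≤ b + 1 := by
    simpa [cuts, hlen] using Finset.card_filter_le (Finset.range ((w.take b).length + 1))
      (IsCut (w.take b))
  have := h.card_le
  change _ ≤ min j b + 1
  grind

lemma Dominated.insert {N n j c : ℕ} {w : List ℕ} (h : Dominated (N, w) (n, j))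
    (hc : c ∈ cuts w) : Dominated (N + 1, w.take c ++ N :: w.drop c)
      (n + 1, ((cuts w).filter (· ≤ c)).card) := by
  obtain ⟨hcn, hcut⟩ := mem_cuts.1 hc
  have hlt : ∀ a ∈ w.take c ++ w.drop c, a < N := by simpa using h.lt
  refine ⟨lt_of_mem_insert hlt, ?_, ?_, ?_⟩
  · have := h.length_eq
    grind
  · exact (avoids_P231_insert hlt).2 ⟨by simpa using h.avoids, hcut⟩
  · have := (Finset.card_le_card (cuts_insert_subset hlt)).trans (Finset.card_insert_le _ _)
    rwa [List.take_append_drop, List.length_take_of_le hcn] at this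

lemma exists_rel_dominated {s : ℕ × List ℕ} {t : ℕ × ℕ} (h : Dominated s t) :
    ∃ u ≤ labelStep t, Multiset.Rel Dominated (prefixStep (Avoids P231) s) u := by
  obtain ⟨N, w⟩ := s
  obtain ⟨n, j⟩ := t
  have hw : w.length = n := h.length_eq
  have hcuts : (Multiset.range (w.length + 1)).filter
      (fun c => Avoids P231 (w.take c ++ N :: w.drop c)) = (cuts w).val := by
    refine Multiset.filter_congr fun c _ => ?_
    rw [avoids_P231_insert (by simpa using h.lt), List.take_append_drop]
    exact and_iff_right h.avoids
  refine ⟨(cuts w).val.map (fun c => (n + 1, ((cuts w).filter (· ≤ c)).card)) +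
    (Multiset.range (n + 1)).map fun b => (b, min j b), ?_, ?_⟩
  · have hrank := congrArg (Multiset.map (Prod.mk (n + 1))) (map_card_filter_le (cuts w))
    simp only [Multiset.map_map, Function.comp_def] at hrank
    rw [hrank]
    exact add_le_add_left (Multiset.map_le_map (Multiset.range_le.2 h.card_le)) _
  · rw [prefixStep_eq, hcuts, hw]
    exact (rel_map_map fun c hc => h.insert hc).add
      (rel_map_map fun b hb => h.take (Nat.lt_succ_iff.1 (Multiset.mem_range.1 hb)))

theorem prefixCount_P231_le {N n j : ℕ} {w : List ℕ} (h : Dominated (N, w) (n, j)) (m : ℕ) :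
    prefixCount (Avoids P231) m N w ≤ labelCount m n j := by
  refine walkCount_le_of_rel Dominated (fun s t hst => ?_) (fun s t => exists_rel_dominated) m _ _ h
  rw [← hst.length_eq]
  simp

lemma avoids_P231_map_succ {w : List ℕ} : Avoids P231 (w.map (· + 1)) ↔ Avoids P231 w := by
  induction w with
  | nil => rfl
  | cons a w ih =>
    rw [Avoids, List.map_cons, List.triplewise_cons, ← Avoids, ih, List.pairwise_map, Avoids,
      Avoids, List.triplewise_cons]
    simp only [P231, Nat.add_lt_add_iff_right, Nat.add_le_add_iff_right]

lemma prefixStep_P231_map_succ (N : ℕ) (w : List ℕ) :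
    prefixStep (Avoids P231) (N + 1, w.map (· + 1)) =
      (prefixStep (Avoids P231) (N, w)).map fun s => (s.1 + 1, s.2.map (· + 1)) := by
  have hins (c : ℕ) : (w.map (· + 1)).take c ++ (N + 1) :: (w.map (· + 1)).drop c =
      (w.take c ++ N :: w.drop c).map (· + 1) := by simp
  simp only [prefixStep_eq, Multiset.map_add, Multiset.map_map, Function.comp_def, hins,
    avoids_P231_map_succ, List.length_map, List.map_take]

lemma prefixCount_P231_add_one (m N : ℕ) :
    prefixCount (Avoids P231) m (N + 1) [] = prefixCount (Avoids P231) m N [] := by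
  refine (walkCount_eq_of_rel (fun s t => t = (s.1 + 1, s.2.map (· + 1))) ?_ ?_ m rfl).symm
  · rintro s _ rfl
    simp
  · rintro ⟨N, w⟩ _ rfl
    rw [prefixStep_P231_map_succ, Multiset.rel_map_right]
    exact Multiset.rel_refl_of_refl_on fun _ _ => rfl

/-- Strictness propagates because the prefix may stay empty for one step. -/
theorem prefixCount_P231_lt {n : ℕ} (hn : 6 ≤ n) :
    prefixCount (Avoids P231) n 0 [] < labelCount n 0 0 := by
  induction n, hn using Nat.le_induction with
  | base => decide +kernel
  | succ m _ ih =>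
    have hone : prefixCount (Avoids P231) m 1 [0] ≤ labelCount m 1 1 :=
      prefixCount_P231_le ⟨by simp, rfl, by decide, by decide⟩ m
    calc prefixCount (Avoids P231) (m + 1) 0 []
        = prefixCount (Avoids P231) m 1 [0] + prefixCount (Avoids P231) m 1 [] := rfl
      _ < labelCount m 1 1 + labelCount m 0 0 := by
        rw [prefixCount_P231_add_one]
        exact add_lt_add_of_le_of_lt hone ih
      _ = labelCount (m + 1) 0 0 := by
        simp [labelCount, walkCount, labelStep]

end Labels231

section BallotWords

/-- Words over `Bool` are read as lattice paths, `true` and `false` being up- and down-steps.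
`raise q` consists of the paths obtained from `q` by inserting an up-step somewhere among its
leading down-steps. -/
def raise : List Bool → Multiset (List Bool)
  | [] => {[true]}
  | true :: q => {true :: true :: q}
  | false :: q => (true :: false :: q) ::ₘ (raise q).map (false :: ·)

/-- The paths obtained from `q` by turning one of its leading up-steps into a down-step and raising
the path behind it. -/
def turn : List Bool → Multiset (List Bool)
  | [] => 0
  | false :: _ => 0
  | true :: q => (turn q).map (true :: ·) + (raise q).map (false :: ·)

/-- The path process, to which the process for `321` reduces. -/
def pathStep (q : List Bool) : Multiset (List Bool) := raise q + turn q + q.tails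

/-- The paths with `b` down-steps and `b + d` up-steps each of whose suffixes has at least as many
up-steps as down-steps. -/
def ballotWords : ℕ → ℕ → Multiset (List Bool)
  | 0, 0 => {[]}
  | d + 1, 0 => (ballotWords d 0).map (true :: ·)
  | 0, b + 1 => (ballotWords 1 b).map (false :: ·)
  | d + 1, b + 1 =>
    (ballotWords d (b + 1)).map (true :: ·) + (ballotWords (d + 2) b).map (false :: ·)
termination_by d b => (b, d)

/-- The lengths of the final runs of up-steps of the paths in `ballotWords d b`. -/
def finalRuns : ℕ → ℕ → Multiset ℕ
  | d, 0 => {d}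
  | 0, b + 1 => finalRuns 1 b
  | d + 1, b + 1 => finalRuns d (b + 1) + finalRuns (d + 2) b
termination_by d b => (b, d)

/-- The shapes of the tails of the paths in `ballotWords d b`, where `(d, b)` is the shape of the
paths in `ballotWords d b`. A shape occurs once for each initial segment that can be cut off. -/
def tailShapes : ℕ → ℕ → Multiset (ℕ × ℕ)
  | 0, 0 => {(0, 0)}
  | d + 1, 0 => (d + 1, 0) ::ₘ tailShapes d 0
  | 0, b + 1 => (0, b + 1) ::ₘ tailShapes 1 b
  | d + 1, b + 1 => (d + 1, b + 1) ::ₘ (tailShapes d (b + 1) + tailShapes (d + 2) b)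
termination_by d b => (b, d)

/-- The shape of the paths into which `turn` transforms those of shape `(d, b)`, if there is one. -/
def turnShape : ℕ → ℕ → Multiset (ℕ × ℕ)
  | 0, _ => 0
  | d + 1, b => {(d, b + 1)}

/-- The process on shapes that underlies both the path process and the label process. -/
def shapeStep (s : ℕ × ℕ) : Multiset (ℕ × ℕ) :=
  (s.1 + 1, s.2) ::ₘ (turnShape s.1 s.2 + tailShapes s.1 s.2)

lemma bind_raise_ballotWords (d b : ℕ) :
    (ballotWords d b).bind raise = ballotWords (d + 1) b := by
  induction b generalizing d with
  | zero => cases d <;> simp [ballotWords, raise, Multiset.bind_map, Multiset.bind_singleton]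
  | succ b ih =>
    have hfalse (d : ℕ) : ((ballotWords d b).map (false :: ·)).bind raise =
        (ballotWords d b).map (fun q => true :: false :: q) +
          (ballotWords (d + 1) b).map (false :: ·) := by
      simp only [Multiset.bind_map, raise, Multiset.bind_cons, ← Multiset.map_bind, ih]
    cases d with
    | zero => rw [ballotWords, hfalse, ballotWords, ballotWords, Multiset.map_map]; rfl
    | succ d =>
      have htrue : ((ballotWords d (b + 1)).map (true :: ·)).bind raise =
          (ballotWords d (b + 1)).map fun q => true :: true :: q := by
        simp only [Multiset.bind_map, raise, Multiset.bind_singleton]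
      rw [ballotWords, Multiset.add_bind, hfalse, htrue, ballotWords.eq_4 (d + 1),
        ballotWords.eq_4 d, Multiset.map_add, Multiset.map_map, Multiset.map_map, ← add_assoc]
      rfl

lemma bind_turn_ballotWords (d b : ℕ) :
    (ballotWords d b).bind turn = (turnShape d b).bind fun s => ballotWords s.1 s.2 := by
  have htrue (d b : ℕ) : ((ballotWords d b).map (true :: ·)).bind turn =
      ((ballotWords d b).bind turn).map (true :: ·) + (ballotWords (d + 1) b).map (false :: ·) := by
    rw [← bind_raise_ballotWords]
    simp only [Multiset.bind_map, turn, Multiset.bind_add, Multiset.map_bind]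
  have hfalse (s : Multiset (List Bool)) : (s.map (false :: ·)).bind turn = 0 := by
    simp [Multiset.bind_map, turn]
  induction d with
  | zero => cases b <;> simp [ballotWords, turnShape, turn, hfalse]
  | succ d ih =>
    have hsucc : (ballotWords (d + 1) b).bind turn =
        ((ballotWords d b).map (true :: ·)).bind turn := by
      cases b <;> simp [ballotWords, hfalse]
    rw [hsucc, htrue, ih]
    cases d <;> simp [turnShape, ballotWords]

lemma bind_tails_ballotWords (d b : ℕ) :
    (ballotWords d b).bind (fun q => (q.tails : Multiset _)) =
      (tailShapes d b).bind fun s => ballotWords s.1 s.2 := by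
  have hcons (e : Bool) (s : Multiset (List Bool)) :
      (s.map (e :: ·)).bind (fun q => (q.tails : Multiset _)) =
        s.map (e :: ·) + s.bind fun q => (q.tails : Multiset _) := by
    simp only [Multiset.bind_map, List.tails_cons, ← Multiset.cons_coe, Multiset.bind_cons]
  induction d, b using ballotWords.induct with
  | case1 => simp [ballotWords, tailShapes]
  | case2 d ih => simp [ballotWords, tailShapes, hcons, ih]
  | case3 b ih => simp [ballotWords, tailShapes, hcons, ih]
  | case4 d b ih₁ ih₂ =>
    simp only [ballotWords, tailShapes, Multiset.add_bind, hcons, ih₁, ih₂, Multiset.cons_bind]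
    abel

lemma bind_range_finalRuns (d b : ℕ) :
    (finalRuns d b).bind (fun j => (Multiset.range (j + 1)).map (· + 1)) = finalRuns d (b + 1) := by
  induction d, b using finalRuns.induct with
  | case1 d =>
    rw [finalRuns, Multiset.singleton_bind]
    induction d with
    | zero => simp [finalRuns]
    | succ d ih =>
      rw [Multiset.range_succ, Multiset.map_cons, ih, finalRuns.eq_3, finalRuns.eq_1,
        add_comm (finalRuns d 1), Multiset.singleton_add]
  | case2 b ih => rw [finalRuns, ih, finalRuns]
  | case3 d b ih₁ ih₂ => rw [finalRuns.eq_3 d, Multiset.add_bind, ih₁, ih₂, finalRuns.eq_3 d]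

lemma finalRuns_succ_right (d b : ℕ) :
    finalRuns d (b + 1) =
      finalRuns (d + 1) b + (turnShape d b).bind fun s => finalRuns s.1 s.2 := by
  cases d <;> simp [finalRuns, turnShape, add_comm (finalRuns _ (b + 1))]

lemma le_of_mem_finalRuns {d b j : ℕ} (hj : j ∈ finalRuns d b) : j ≤ 2 * b + d := by
  induction d, b using finalRuns.induct with
  | case1 d => simp_all [finalRuns]
  | case2 b ih => grind [finalRuns]
  | case3 d b ih₁ ih₂ => grind [finalRuns]

lemma bind_map_min_finalRuns (d b : ℕ) :
    (finalRuns d b).bind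
        (fun j => (Multiset.range (2 * b + d + 1)).map fun k => (k, min j k)) =
      (tailShapes d b).bind fun s => (finalRuns s.1 s.2).map (Prod.mk (2 * s.2 + s.1)) := by
  have htop {n : ℕ} {s : Multiset ℕ} (hs : ∀ j ∈ s, j ≤ n) :
      s.bind (fun j => (Multiset.range (n + 1)).map fun k => (k, min j k)) =
        s.map (Prod.mk n) + s.bind fun j => (Multiset.range n).map fun k => (k, min j k) := by
    simp only [Multiset.range_succ, Multiset.map_cons, Multiset.bind_cons]
    rw [Multiset.map_congr rfl fun j hj => by rw [min_eq_left (hs j hj)]]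
  induction d, b using ballotWords.induct with
  | case1 => simp [finalRuns, tailShapes]
  | case2 d ih =>
    rw [htop fun j hj => le_of_mem_finalRuns hj, tailShapes, Multiset.cons_bind, ← ih]
    simp only [finalRuns, Multiset.singleton_bind]
    refine congrArg _ (Multiset.map_congr (by grind) fun k hk => ?_)
    have := Multiset.mem_range.1 hk
    grind
  | case3 b ih =>
    rw [htop fun j hj => le_of_mem_finalRuns hj, tailShapes, Multiset.cons_bind, ← ih, finalRuns]
    rfl
  | case4 d b ih₁ ih₂ =>
    rw [htop fun j hj => le_of_mem_finalRuns hj, tailShapes, Multiset.cons_bind,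
      Multiset.add_bind, ← ih₁, ← ih₂, finalRuns.eq_3 d, Multiset.add_bind,
      show 2 * (b + 1) + (d + 1) = 2 * (b + 1) + d + 1 from rfl,
      show 2 * b + (d + 2) + 1 = 2 * (b + 1) + d + 1 by ring]

lemma sum_map_ballotWords (d b : ℕ) :
    ((ballotWords d b).map fun q => if q = [] then 1 else 0).sum =
      if (d, b) = (0, 0) then 1 else 0 := by
  cases d <;> cases b <;> simp [ballotWords]

lemma bind_shapeStep_ballotWords (s : ℕ × ℕ) :
    ((shapeStep s).bind fun s => ballotWords s.1 s.2) = (ballotWords s.1 s.2).bind pathStep := by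
  unfold pathStep
  simp only [shapeStep, Multiset.bind_add, Multiset.cons_bind, Multiset.add_bind,
    bind_raise_ballotWords, bind_turn_ballotWords, bind_tails_ballotWords, add_assoc]

/-- The labels `(n, j)` of the paths of shape `s`: the length `n` of such a path, and the length `j`
of its final run. -/
def shapeLabels (s : ℕ × ℕ) : Multiset (ℕ × ℕ) := (finalRuns s.1 s.2).map (Prod.mk (2 * s.2 + s.1))

lemma bind_turnShape_shapeLabels (d b : ℕ) :
    (turnShape d b).bind shapeLabels =
      ((turnShape d b).bind fun s => finalRuns s.1 s.2).map (Prod.mk (2 * b + d + 1)) := by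
  cases d with
  | zero => rfl
  | succ d =>
    simp only [turnShape, Multiset.singleton_bind, shapeLabels]
    grind

lemma bind_shapeStep_shapeLabels (s : ℕ × ℕ) :
    (shapeStep s).bind shapeLabels = (shapeLabels s).bind labelStep := by
  obtain ⟨d, b⟩ := s
  calc (shapeStep (d, b)).bind shapeLabels
      = (finalRuns d (b + 1)).map (Prod.mk (2 * b + d + 1)) +
          (tailShapes d b).bind shapeLabels := by
        rw [shapeStep, Multiset.cons_bind, Multiset.add_bind, bind_turnShape_shapeLabels,
          finalRuns_succ_right, Multiset.map_add, ← add_assoc]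
        rfl
    _ = (shapeLabels (d, b)).bind labelStep := by
        rw [← bind_range_finalRuns, Multiset.map_bind, shapeLabels, Multiset.bind_map]
        unfold shapeLabels labelStep
        simp only [Multiset.bind_add, Multiset.map_map, Function.comp_def, bind_map_min_finalRuns]

theorem walkCount_pathStep (m : ℕ) :
    walkCount pathStep (fun q => if q = [] then 1 else 0) m [] = labelCount m 0 0 := by
  have hpath := walkCount_eq_sum_map (step := shapeStep) (step' := pathStep)
    (fun s => ballotWords s.1 s.2) (fun s => (sum_map_ballotWords s.1 s.2).symm)
    bind_shapeStep_ballotWords m (0, 0)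
  have hlabel := walkCount_eq_sum_map (step := shapeStep) (step' := labelStep)
    (e := fun s => if s = (0, 0) then 1 else 0) (e' := fun s => if s.1 = 0 then 1 else 0)
    shapeLabels (by rintro ⟨_ | d, _ | b⟩ <;> simp [shapeLabels, finalRuns])
    bind_shapeStep_shapeLabels m (0, 0)
  simp only [ballotWords, shapeLabels, finalRuns, Multiset.map_singleton, Multiset.sum_singleton]
    at hpath hlabel
  exact hpath.symm.trans hlabel

end BallotWords

section AscentCodes

/-- The path `q` encodes the word `v`: it has the same length, and a down-step of `q` is followed by
an up-step exactly where a letter of `v` is followed by a larger one. -/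
inductive IsAscentCode : List ℕ → List Bool → Prop
  | nil : IsAscentCode [] []
  | cons {x : ℕ} {e : Bool} {v : List ℕ} {q : List Bool} (h : IsAscentCode v q)
      (hx : (∃ y ∈ v.head?, x < y) ↔ e = false ∧ q.head? = some true) :
      IsAscentCode (x :: v) (e :: q)

/-- The words obtained from `v` by inserting `N` behind a weakly decreasing prefix. -/
def descInsertions (N : ℕ) (v : List ℕ) : Multiset (List ℕ) :=
  ((splits v).filter fun p => p.1.Pairwise (· ≥ ·)).map fun p => p.1 ++ N :: p.2

lemma descInsertions_cons {N x : ℕ} {v : List ℕ} (hx : ∀ y ∈ v.head?, y ≤ x) :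
    descInsertions N (x :: v) = (N :: x :: v) ::ₘ (descInsertions N v).map (x :: ·) := by
  have hsorted : ∀ p ∈ splits v,
      ((x :: p.1).Pairwise (· ≥ ·) ↔ p.1.Pairwise (· ≥ ·)) := by
    rintro ⟨_ | ⟨y, s⟩, t⟩ hp
    · simp
    · obtain rfl := append_of_mem_splits hp
      have hy : y ≤ x := hx y rfl
      simp only [List.pairwise_cons, List.mem_cons, forall_eq_or_imp]
      grind
  have hnil : ([] : List ℕ).Pairwise (· ≥ ·) := .nil
  simp only [descInsertions, splits, Multiset.filter_cons, Multiset.filter_map, Multiset.map_map,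
    Function.comp_def, Multiset.filter_congr hsorted, hnil, if_true,
    Multiset.singleton_add, Multiset.map_cons, List.nil_append, List.cons_append]

lemma descInsertions_cons_cons_of_lt {N x y : ℕ} {v : List ℕ} (hxy : x < y) :
    descInsertions N (x :: y :: v) = {N :: x :: y :: v, x :: N :: y :: v} := by
  have hnone : ∀ p ∈ splits v, ¬ (x :: y :: p.1).Pairwise (· ≥ ·) :=
    fun p _ hp => (List.rel_of_pairwise_cons hp List.mem_cons_self).not_gt hxy
  simp only [descInsertions, splits, Multiset.map_cons, Multiset.map_map, Function.comp_def,
    Multiset.filter_cons, Multiset.filter_map, Multiset.filter_eq_nil.2 hnone]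
  simp

/-- `(v', q')` arises from a word `v` and its code by inserting the letter `N` and raising the path;
moreover, a down-step in front of `q'` encodes any letter in front of `v'` that did not create an
ascent in front of `v`. -/
def IsRaised (N : ℕ) (v v' : List ℕ) (q' : List Bool) : Prop :=
  IsAscentCode v' q' ∧ ∀ x < N, (∀ y ∈ v.head?, y ≤ x) →
    ((∃ y ∈ v'.head?, x < y) ↔ q'.head? = some true)

/-- `(v', q')` arises from a word `v` and its code by inserting a letter and turning the path. -/
def IsTurned (v v' : List ℕ) (q' : List Bool) : Prop := IsAscentCode v' q' ∧ v'.head? = v.head?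

lemma IsAscentCode.isRaised_cons {N : ℕ} {v : List ℕ} {q : List Bool} (h : IsAscentCode v q)
    (hN : ∀ x ∈ v, x < N) : IsRaised N v (N :: v) (true :: q) := by
  refine ⟨h.cons ?_, fun x hx _ => by simpa using hx⟩
  simpa using fun y hy => (hN y (List.mem_of_mem_head? hy)).le

lemma IsRaised.cons {N x : ℕ} {v v' : List ℕ} {q' : List Bool} (h : IsRaised N v v' q')
    (hxN : x < N) (hx : ∀ y ∈ v.head?, y ≤ x) : IsRaised N (x :: v) (x :: v') (false :: q') :=
  ⟨h.1.cons (by simpa using h.2 x hxN hx), by simp⟩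

lemma IsTurned.cons {x : ℕ} {v v' : List ℕ} {q' : List Bool} (h : IsTurned v v' q')
    (hx : ∀ y ∈ v.head?, y ≤ x) : IsTurned (x :: v) (x :: v') (true :: q') :=
  ⟨h.1.cons (by simpa [h.2] using hx), rfl⟩

lemma turn_eq_zero {q : List Bool} (hq : q.head? ≠ some true) : turn q = 0 := by
  match q, hq with
  | [], _ => rfl
  | false :: _, _ => rfl
  | true :: _, hq => simp at hq

lemma exists_rel_descInsertions {N : ℕ} {v : List ℕ} {q : List Bool} (h : IsAscentCode v q)
    (hN : ∀ x ∈ v, x < N) :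
    ∃ s t, descInsertions N v = s + t ∧ Multiset.Rel (IsRaised N v) s (raise q) ∧
      Multiset.Rel (IsTurned v) t (turn q) := by
  have htop := h.isRaised_cons hN
  induction h with
  | nil => exact ⟨{[N]}, 0, rfl, .cons htop .zero, .zero⟩
  | @cons x e v q h hx ih =>
    have hN' : ∀ y ∈ v, y < N := fun y hy => hN y (List.mem_cons_of_mem x hy)
    have hxN : x < N := hN x List.mem_cons_self
    obtain ⟨s, t, hst, hs, ht⟩ := ih hN' (h.isRaised_cons hN')
    by_cases hasc : ∃ y ∈ v.head?, x < y
    · obtain ⟨rfl, hq⟩ := hx.1 hasc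
      obtain ⟨q, rfl⟩ := List.head?_eq_some_iff.1 hq
      cases v with
      | nil => simp at hasc
      | cons y v =>
        exact ⟨{N :: x :: y :: v, x :: N :: y :: v}, 0,
          by rw [descInsertions_cons_cons_of_lt (by simpa using hasc), add_zero],
          .cons htop (.cons ⟨(h.isRaised_cons hN').1.cons (by simpa using hxN), by simp⟩ .zero),
          .zero⟩
    · have hle : ∀ y ∈ v.head?, y ≤ x := by simpa using hasc
      have hs' : Multiset.Rel (IsRaised N (x :: v)) (s.map (x :: ·)) ((raise q).map (false :: ·)) :=
        Multiset.rel_map.2 <| hs.mono fun _ _ _ _ h => h.cons hxN hle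
      rw [descInsertions_cons hle, hst, Multiset.map_add]
      cases e with
      | false =>
        have hq : turn q = 0 := turn_eq_zero (by simpa using hx.not.1 hasc)
        obtain rfl : t = 0 := Multiset.rel_zero_right.1 (hq ▸ ht)
        exact ⟨(N :: x :: v) ::ₘ s.map (x :: ·), 0, by simp, .cons htop hs', .zero⟩
      | true =>
        have ht' : Multiset.Rel (IsTurned (x :: v)) (t.map (x :: ·)) ((turn q).map (true :: ·)) :=
          Multiset.rel_map.2 <| ht.mono fun _ _ _ _ h => h.cons hle
        refine ⟨{N :: x :: v}, t.map (x :: ·) + s.map (x :: ·), ?_, .cons htop .zero,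
          ht'.add (hs'.mono ?_)⟩
        · rw [Multiset.singleton_add, add_comm (t.map _)]
        · intro w hw _ _ h
          obtain ⟨w, -, rfl⟩ := Multiset.mem_map.1 hw
          exact ⟨h.1, rfl⟩

lemma IsAscentCode.rel_tails {v : List ℕ} {q : List Bool} (h : IsAscentCode v q) :
    Multiset.Rel IsAscentCode (v.tails : Multiset _) (q.tails : Multiset _) := by
  induction h with
  | nil => exact .cons .nil .zero
  | cons h hx ih =>
    rw [List.tails_cons, List.tails_cons, ← Multiset.cons_coe, ← Multiset.cons_coe]
    exact .cons (h.cons hx) ih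

lemma splits_concat {α : Type*} (v : List α) (x : α) :
    splits (v ++ [x]) = (v ++ [x], []) ::ₘ (splits v).map fun p => (p.1, p.2 ++ [x]) := by
  induction v with
  | nil => simpa [splits] using Multiset.cons_swap _ _ 0
  | cons y v ih =>
    simp only [List.cons_append, splits, ih, Multiset.map_cons, Multiset.map_map]
    exact Multiset.cons_swap ..

lemma splits_reverse {α : Type*} (v : List α) :
    splits v.reverse = (splits v).map fun p => (p.2.reverse, p.1.reverse) := by
  induction v with
  | nil => rfl
  | cons x v ih => simp [splits, splits_concat, ih]

lemma filter_insertions_P321 {N : ℕ} {w : List ℕ} (hw : Avoids P321 w) (hN : ∀ a ∈ w, a < N) :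
    (insertions N w).filter (Avoids P321) = (descInsertions N w.reverse).map List.reverse := by
  have hok : ∀ p ∈ splits w,
      (Avoids P321 (p.1 ++ N :: p.2) ↔ p.2.reverse.Pairwise (· ≥ ·)) := by
    intro p hp
    rw [← append_of_mem_splits hp] at hw hN
    rw [avoids_P321_insert hN, List.pairwise_reverse]
    exact and_iff_right hw
  simp only [insertions, descInsertions, splits_reverse, Multiset.filter_map, Multiset.map_map,
    Function.comp_def, Multiset.filter_congr hok, List.reverse_append, List.reverse_cons,
    List.reverse_reverse, List.append_assoc, List.singleton_append]

/-- The state `(N, w)` of the process for `321` is encoded by the path `q`, the word `w` being read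
from right to left. -/
def IsEncodedBy (s : ℕ × List ℕ) (q : List Bool) : Prop :=
  (∀ a ∈ s.2, a < s.1) ∧ Avoids P321 s.2 ∧ IsAscentCode s.2.reverse q

lemma IsEncodedBy.rel_prefixStep {s : ℕ × List ℕ} {q : List Bool} (h : IsEncodedBy s q) :
    Multiset.Rel IsEncodedBy (prefixStep (Avoids P321) s) (pathStep q) := by
  obtain ⟨N, w⟩ := s
  obtain ⟨hN, hw, hq⟩ := h
  have hinsert : Multiset.Rel (fun w' q' => IsEncodedBy (N + 1, w') q')
      ((insertions N w).filter (Avoids P321)) (raise q + turn q) := by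
    obtain ⟨s, t, hst, hs, ht⟩ := exists_rel_descInsertions hq (by simpa using hN)
    have hrel : Multiset.Rel IsAscentCode (descInsertions N w.reverse) (raise q + turn q) :=
      hst ▸ (hs.mono fun _ _ _ _ h => h.1).add (ht.mono fun _ _ _ _ h => h.1)
    have hrel' : Multiset.Rel (fun w' q' => IsAscentCode w'.reverse q')
        ((insertions N w).filter (Avoids P321)) (raise q + turn q) := by
      rw [filter_insertions_P321 hw hN, Multiset.rel_map_left]
      simpa only [List.reverse_reverse] using hrel
    refine hrel'.mono fun w' hw' q' _ hcode => ?_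
    obtain ⟨hw', hok⟩ := Multiset.mem_filter.1 hw'
    obtain ⟨p, hp, rfl⟩ := Multiset.mem_map.1 hw'
    rw [← append_of_mem_splits hp] at hN
    exact ⟨lt_of_mem_insert hN, hok, hcode⟩
  have hinits : Multiset.Rel (fun w' q' => IsEncodedBy (N + 1, w') q')
      (w.inits : Multiset _) (q.tails : Multiset _) := by
    have hw' : (w.inits : Multiset (List ℕ)) =
        (w.reverse.tails : Multiset (List ℕ)).map List.reverse := by
      rw [List.inits_eq_tails, Multiset.coe_reverse, Multiset.map_coe]
    rw [hw', Multiset.rel_map_left]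
    refine hq.rel_tails.mono fun v hv q' _ hcode => ?_
    have hsub : v.reverse.Sublist w := by
      simpa using ((List.mem_tails _ _).1 hv).sublist.reverse
    exact ⟨fun a ha => (hN a (hsub.subset ha)).trans N.lt_succ_self, hw.sublist _ _ hsub,
      by rwa [List.reverse_reverse]⟩
  rw [prefixStep, pathStep, Multiset.rel_map_left]
  exact hinsert.add hinits

theorem prefixCount_P321_eq (m : ℕ) : prefixCount (Avoids P321) m 0 [] = labelCount m 0 0 := by
  rw [← walkCount_pathStep]
  refine walkCount_eq_of_rel IsEncodedBy ?_ (fun _ _ h => h.rel_prefixStep) m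
    ⟨by simp, avoids_nil, .nil⟩
  rintro ⟨N, w⟩ q ⟨-, -, h⟩
  have hnil {v : List ℕ} (h : IsAscentCode v q) : v = [] ↔ q = [] := by cases h <;> simp
  simp [← hnil h]

end AscentCodes

section Frames

variable {α β : Type*} [LinearOrder α] [LinearOrder β]

/-- The left-to-right maxima of `π`, as points of its graph. -/
def lrMaxima (π : α → β) : Set (α × β) :=
  {p | π p.1 = p.2 ∧ ∀ j < p.1, π j < p.2}

/-- The right-to-left minima of `π`, as points of its graph: the left-to-right maxima for the
reversed orders. -/
def rlMinima (π : α → β) : Set (α × β) :=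
  lrMaxima (α := αᵒᵈ) (β := βᵒᵈ) π

/-- The frame of `π`: its left-to-right maxima and its right-to-left minima, with their positions.
Permutations avoiding `4321` are compared with those avoiding `4231` frame by frame. -/
def frame (π : α → β) : Set (α × β) × Set (α × β) :=
  (lrMaxima π, rlMinima π)

lemma lrMaxima_subset_comp_swap {π : α → β} {a b c : α} (hab : a < b) (hbc : b < c)
    (hb : π b < π a) (hc : π c < π a) : lrMaxima π ⊆ lrMaxima (π ∘ swap b c) := by
  rintro ⟨i, v⟩ ⟨hv, hi⟩
  obtain rfl : π i = v := hv
  have hib : i ≠ b := by rintro rfl; exact hb.asymm (hi a hab)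
  have hic : i ≠ c := by rintro rfl; exact hc.asymm (hi a (hab.trans hbc))
  refine ⟨congrArg π (swap_apply_of_ne_of_ne hib hic), fun j hj => ?_⟩
  simp only [Function.comp_apply, swap_apply_def]
  split_ifs with hjb hjc
  · exact hc.trans (hi a (hab.trans (hjb ▸ hj)))
  · exact hi b (hbc.trans (hjc ▸ hj))
  · exact hi j hj

lemma lrMaxima_comp_swap {π : α → β} {a b c : α} (hab : a < b) (hbc : b < c)
    (hb : π b < π a) (hc : π c < π a) : lrMaxima (π ∘ swap b c) = lrMaxima π := by
  refine (lrMaxima_subset_comp_swap hab hbc hb hc).antisymm' ?_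
  have ha : swap b c a = a := swap_apply_of_ne_of_ne hab.ne (hab.trans hbc).ne
  have h := lrMaxima_subset_comp_swap (π := π ∘ swap b c) hab hbc (by simpa [ha]) (by simpa [ha])
  rwa [Function.comp_assoc, ← coe_trans, swap_swap, coe_refl, Function.comp_id] at h

lemma frame_comp_swap {π : α → β} {a b c d : α} (hab : a < b) (hbc : b < c) (hcd : c < d)
    (hb : π b ∈ Set.Ioo (π d) (π a)) (hc : π c ∈ Set.Ioo (π d) (π a)) :
    frame (π ∘ swap b c) = frame π := by
  refine Prod.ext (lrMaxima_comp_swap hab hbc hb.2 hc.2) ?_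
  rw [swap_comm]
  exact lrMaxima_comp_swap (α := αᵒᵈ) (β := βᵒᵈ) hcd hbc hc.1 hb.1

lemma mem_lrMaxima {π : α → β} {i : α} : (i, π i) ∈ lrMaxima π ↔ ∀ j < i, π j < π i := by
  simp [lrMaxima]

lemma mem_rlMinima {π : α → β} {i : α} : (i, π i) ∈ rlMinima π ↔ ∀ j > i, π i < π j :=
  mem_lrMaxima (α := αᵒᵈ) (β := βᵒᵈ)

lemma apply_eq_of_mem_frame {π σ : α → β} (h : frame π = frame σ) {i : α}
    (hi : (i, π i) ∈ lrMaxima π ∨ (i, π i) ∈ rlMinima π) : σ i = π i := by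
  obtain ⟨hmax, hmin⟩ := Prod.mk.inj h
  rw [hmax, hmin] at hi
  exact hi.elim And.left And.left

end Frames

section FrameClasses

variable {n : ℕ} {π σ : Perm (Fin n)}

lemma containsPat_p4321_iff : ContainsPat π p4321 ↔
    ∃ a b c d, a < b ∧ b < c ∧ c < d ∧ π d < π c ∧ π c < π b ∧ π b < π a := by
  constructor
  · rintro ⟨f, hf, h⟩
    exact ⟨f 0, f 1, f 2, f 3, hf (by decide), hf (by decide), hf (by decide),
      (h 3 2).1 (by decide), (h 2 1).1 (by decide), (h 1 0).1 (by decide)⟩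
  · rintro ⟨a, b, c, d, hab, hbc, hcd, hdc, hcb, hba⟩
    refine ⟨![a, b, c, d], ?_, ?_⟩
    · simp [Fin.strictMono_iff_lt_succ, Fin.forall_fin_succ, hab, hbc, hcd]
    · simp [Fin.forall_fin_succ, p4321]
      omega

lemma containsPat_p4231_iff : ContainsPat π p4231 ↔
    ∃ a b c d, a < b ∧ b < c ∧ c < d ∧ π d < π b ∧ π b < π c ∧ π c < π a := by
  constructor
  · rintro ⟨f, hf, h⟩
    exact ⟨f 0, f 1, f 2, f 3, hf (by decide), hf (by decide), hf (by decide),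
      (h 3 1).1 (by decide), (h 1 2).1 (by decide), (h 2 0).1 (by decide)⟩
  · rintro ⟨a, b, c, d, hab, hbc, hcd, hdb, hbc', hca⟩
    refine ⟨![a, b, c, d], ?_, ?_⟩
    · simp [Fin.strictMono_iff_lt_succ, Fin.forall_fin_succ, hab, hbc, hcd]
    · simp [Fin.forall_fin_succ, p4231]
      omega

lemma lt_of_notMem_frame (hσ : ¬ ContainsPat σ p4321) {i j : Fin n} (hij : i < j)
    (hi : (i, σ i) ∉ lrMaxima σ) (hj : (j, σ j) ∉ rlMinima σ) : σ i < σ j := by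
  by_contra! hji
  simp only [mem_lrMaxima, mem_rlMinima, not_forall, not_lt] at hi hj
  obtain ⟨a, hai, hia⟩ := hi
  obtain ⟨d, hjd, hdj⟩ := hj
  exact hσ (containsPat_p4321_iff.mpr ⟨a, i, j, d, hai, hij, hjd,
    hdj.lt_of_ne (σ.injective.ne hjd.ne'), hji.lt_of_ne (σ.injective.ne hij.ne'),
    hia.lt_of_ne (σ.injective.ne hai.ne')⟩)

/-- At the first position `i` where `π` and `σ` differ, suppose `π i < σ i`. The value `π i` occurs
in `σ` at some `j > i`, and neither `(i, σ i)` nor `(j, π i)` lies in the common frame. -/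
lemma toLex_le_of_frame_eq (hσ : ¬ ContainsPat σ p4321) (h : frame π = frame σ) :
    toLex ⇑σ ≤ toLex ⇑π := by
  by_contra! hlt
  obtain ⟨i, hpre, hi⟩ := hlt
  simp only [Pi.toLex_apply] at hpre hi
  obtain ⟨j, hj⟩ := σ.surjective (π i)
  have hij : i < j := by
    refine lt_of_le_of_ne (not_lt.mp fun hji => ?_) (by rintro rfl; exact hi.ne' hj)
    exact hji.ne (π.injective ((hpre j hji).trans hj))
  have hiF : (i, σ i) ∉ lrMaxima σ := fun hmem =>
    hi.ne (apply_eq_of_mem_frame h.symm (.inl hmem))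
  have hjF : (j, σ j) ∉ rlMinima σ := fun hmem =>
    hij.ne' (π.injective ((apply_eq_of_mem_frame h.symm (.inr hmem)).trans hj))
  exact (hj ▸ lt_of_notMem_frame hσ hij hiF hjF).asymm hi

lemma frame_injOn_avoiding_p4321 :
    Set.InjOn (fun π : Perm (Fin n) => frame π) {π | ¬ ContainsPat π p4321} := by
  intro π hπ σ hσ h
  have hlex : toLex ⇑π = toLex ⇑σ :=
    (toLex_le_of_frame_eq hπ h.symm).antisymm (toLex_le_of_frame_eq hσ h)
  exact DFunLike.coe_injective (toLex.injective hlex)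

/-- Exchanging the inner entries of an occurrence of `4231` raises the permutation
lexicographically. -/
lemma exists_frame_eq_avoiding_p4231 (π : Perm (Fin n)) :
    ∃ ρ : Perm (Fin n), frame ρ = frame π ∧ ¬ ContainsPat ρ p4231 := by
  obtain ⟨ρ, hρ, hmax⟩ := Set.exists_max_image {ρ : Perm (Fin n) | frame ρ = frame π}
    (fun ρ => toLex ⇑ρ) (Set.toFinite _) ⟨π, rfl⟩
  refine ⟨ρ, hρ, fun hcon => ?_⟩
  obtain ⟨a, b, c, d, hab, hbc, hcd, hdb, hbc', hca⟩ := containsPat_p4231_iff.mp hcon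
  have hframe : frame (ρ * swap b c) = frame ρ :=
    frame_comp_swap hab hbc hcd ⟨hdb, hbc'.trans hca⟩ ⟨hdb.trans hbc', hca⟩
  have hlt : toLex ⇑ρ < toLex ⇑(ρ * swap b c) :=
    ⟨b, fun j hj => (congrArg ρ (swap_apply_of_ne_of_ne hj.ne (hj.trans hbc).ne)).symm,
      by simpa using hbc'⟩
  exact (hmax _ (hframe.trans hρ)).not_gt hlt

end FrameClasses

section TwoInOneClass

variable {m n : ℕ}

/-- The permutation `π` of `Fin m`, extended to `Fin n` by fixed points at the end. -/
noncomputable def extendFin (h : m ≤ n) : Perm (Fin m) →* Perm (Fin n) :=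
  Perm.viaEmbeddingHom (Fin.castLEEmb h)

lemma extendFin_castLE (h : m ≤ n) (π : Perm (Fin m)) (i : Fin m) :
    extendFin h π (Fin.castLE h i) = Fin.castLE h (π i) :=
  Perm.viaEmbedding_apply π (Fin.castLEEmb h) i

lemma extendFin_of_le (h : m ≤ n) (π : Perm (Fin m)) {i : Fin n} (hi : m ≤ i) :
    extendFin h π i = i := by
  refine Perm.viaEmbedding_apply_of_notMem π (Fin.castLEEmb h) i ?_
  rintro ⟨j, rfl⟩
  exact hi.not_gt j.isLt

lemma extendFin_swap (h : m ≤ n) (i j : Fin m) :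
    extendFin h (swap i j) = swap (Fin.castLE h i) (Fin.castLE h j) := by
  ext k : 1
  rcases lt_or_ge (k : ℕ) m with hk | hk
  · obtain ⟨l, rfl⟩ : ∃ l : Fin m, Fin.castLE h l = k := ⟨⟨k, hk⟩, rfl⟩
    rw [extendFin_castLE, (Fin.castLE_injective h).swap_apply]
  · rw [extendFin_of_le h _ hk, swap_apply_of_ne_of_ne] <;> rintro rfl
    exacts [hk.not_gt i.isLt, hk.not_gt j.isLt]

lemma frame_extendFin_mul_swap (h : m ≤ n) {π : Perm (Fin m)} {a b c d : Fin m} (hab : a < b)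
    (hbc : b < c) (hcd : c < d) (hb : π b ∈ Set.Ioo (π d) (π a))
    (hc : π c ∈ Set.Ioo (π d) (π a)) :
    frame (extendFin h (π * swap b c)) = frame (extendFin h π) := by
  have hmono : StrictMono (Fin.castLE h) :=
    Fin.strictMono_castLE h
  rw [map_mul, extendFin_swap]
  refine frame_comp_swap (π := extendFin h π) (hmono hab) (hmono hbc) (hmono hcd) ?_ ?_ <;>
    simp only [extendFin_castLE]
  exacts [⟨hmono hb.1, hmono hb.2⟩, ⟨hmono hc.1, hmono hc.2⟩]

lemma extendFin_avoids_p4231 (h : m ≤ n) {π : Perm (Fin m)} (hπ : ¬ ContainsPat π p4231) :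
    ¬ ContainsPat (extendFin h π) p4231 := by
  contrapose! hπ
  obtain ⟨a, b, c, d, hab, hbc, hcd, hdb, hbc', hca⟩ := containsPat_p4231_iff.mp hπ
  have hd : (d : ℕ) < m := by
    by_contra! hd
    rw [extendFin_of_le h π hd] at hdb
    rcases lt_or_ge (b : ℕ) m with hb | hb
    · have hπb : extendFin h π b = Fin.castLE h (π ⟨b, hb⟩) := extendFin_castLE h π ⟨b, hb⟩
      rw [hπb] at hdb
      exact hd.not_gt (lt_trans hdb (π ⟨b, hb⟩).isLt)
    · rw [extendFin_of_le h π hb] at hdb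
      exact hdb.asymm (hbc.trans hcd)
  have hlift : ∀ i ≤ d, ∃ j : Fin m, Fin.castLE h j = i := fun i hi => ⟨⟨i, by omega⟩, rfl⟩
  obtain ⟨a, rfl⟩ := hlift a (by order)
  obtain ⟨b, rfl⟩ := hlift b (by order)
  obtain ⟨c, rfl⟩ := hlift c (by order)
  obtain ⟨d, rfl⟩ := hlift d le_rfl
  simp only [extendFin_castLE] at hdb hbc' hca
  exact containsPat_p4231_iff.mpr ⟨a, b, c, d, hab, hbc, hcd, hdb, hbc', hca⟩

/-- The permutation `5 2 7 6 1 4 3` (in the code, values start from `0`). It and `5 4 7 2 1 6 3`,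
obtained from it by two exchanges of inner entries, form a frame class with two permutations
avoiding `4231`. -/
def perm5276143 : Perm (Fin 7) :=
  ⟨![4, 1, 6, 5, 0, 3, 2], ![4, 1, 6, 5, 0, 3, 2], by decide, by decide⟩

lemma exists_ne_frame_eq_avoiding_p4231 (hn : 7 ≤ n) :
    ∃ ρ σ : Perm (Fin n), ρ ≠ σ ∧ frame ρ = frame σ ∧
      ¬ ContainsPat ρ p4231 ∧ ¬ ContainsPat σ p4231 := by
  set π := perm5276143
  refine ⟨extendFin hn (π * swap 3 5 * swap 1 3), extendFin hn π, ?_, ?_, ?_, ?_⟩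
  · exact (Perm.viaEmbeddingHom_injective _).ne (by decide)
  · rw [frame_extendFin_mul_swap hn (a := 0) (d := 4),
      frame_extendFin_mul_swap hn (a := 2) (d := 6)]
    all_goals decide
  all_goals
    refine extendFin_avoids_p4231 hn (containsPat_p4231_iff.not.mpr ?_)
    decide +kernel

theorem SnCard_p4321_lt_SnCard_p4231 (hn : 7 ≤ n) : SnCard n p4321 < SnCard n p4231 := by
  let F (π : Perm (Fin n)) := frame π
  let A : Set (Perm (Fin n)) := {π | ¬ ContainsPat π p4321}
  let B : Set (Perm (Fin n)) := {π | ¬ ContainsPat π p4231}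
  have hsub : F '' A ⊆ F '' B := by
    rintro _ ⟨π, -, rfl⟩
    obtain ⟨ρ, hρ, hB⟩ := exists_frame_eq_avoiding_p4231 π
    exact ⟨ρ, hB, hρ⟩
  have hninj : ¬ Set.InjOn F B := fun hinj =>
    let ⟨_, _, hne, hF, hρ, hσ⟩ := exists_ne_frame_eq_avoiding_p4231 hn
    hne (hinj hρ hσ hF)
  calc A.ncard = (F '' A).ncard := frame_injOn_avoiding_p4321.ncard_image.symm
    _ ≤ (F '' B).ncard := Set.ncard_le_ncard hsub
    _ < B.ncard := (Set.ncard_image_le).lt_of_ne fun h => hninj (Set.injOn_of_ncard_image_eq h)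

end TwoInOneClass

end PatternOrder

theorem stmt5 (n : ℕ) (hn : 7 ≤ n) :
    SnCard n p3241 < SnCard n p2341 ∧ SnCard n p2341 < SnCard n p4231 := by
  have h2341 : SnCard n p2341 = PatternOrder.labelCount n 0 0 :=
    (PatternOrder.SnCard_p2341 n).trans (PatternOrder.prefixCount_P321_eq n)
  have h4321 : SnCard n PatternOrder.p4321 = PatternOrder.labelCount n 0 0 :=
    (PatternOrder.SnCard_p4321 n).trans (PatternOrder.prefixCount_P123_eq n)
  constructor
  · rw [h2341, PatternOrder.SnCard_p3241]
    exact PatternOrder.prefixCount_P231_lt (by omega)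
  · rw [h2341, ← h4321]
    exact PatternOrder.SnCard_p4321_lt_SnCard_p4231 hn
end

section
/- Let Y be a Young diagram of size n given by b, let σ be any permutation, and let y ∈ {1,…,n−1} satisfy b(y+1) > b(y) and b(y) − y = i with i ∈ {0, 1} (a 0- or 1-critical point of Y). Define the Young diagram Y'' of size n − y by b''(t) = b(y + t) − y for 1 ≤ t ≤ n − y. If i = 0, define Y' of size y by b'(t) = b(t) for 1 ≤ t ≤ y; if i = 1, define Y' of size y + 1 by b'(t) = min(b(t), y+1) for 1 ≤ t ≤ y + 1. Then |S_Y(σ)| = |S_{Y'}(σ)| · |S_{Y''}(σ)|. -/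
/-! Let `m = y + i` and index columns and heights from `0`. Let a permutation `p` of `Fin m` act on
`Fin n` by fixing the letters from `m` on, and a permutation `q` of `Fin (n - y)` by shifting it by
`y` and fixing the letters below `y`. The rows of `Y` below height `y` have length at most `m`, so
the low dots of a transversal `π` lie in its first `m` columns; this says exactly that `π = q * p`
for some `p` and `q`. The two subgroups overlap only in the permutations of `{y, …, m - 1}`, so the
factorization is unique as soon as `i ≤ 1`.

Since the rows from height `y` on have length at least `m`, a cell `(t, v)` with `t < m` is in `Y`
iff `(t, q v)` is, and a cell `(t, v)` with `y ≤ v` is in `Y` iff `(p t, v)` is. Hence `q * p` is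
a transversal of `Y` iff `p` and `q` are transversals of `Y'` and `Y''`. An occurrence of a pattern
with a dot below height `y` uses only the first `m` columns, and the others only heights from `y`
on; for `i ≤ 1` the factor `q` is increasing on `{0, …, m - 1}` and `p` is increasing on
`{y, …, n - 1}`, so these are the occurrences in `p` inside `Y'` and in `q` inside `Y''`. -/

open Equiv

section ViaEmbedding

variable {α β : Type*}

theorem viaEmbedding_apply_mem_range_iff (e : Perm α) (ι : α ↪ β) (x : β) :
    e.viaEmbedding ι x ∈ Set.range ι ↔ x ∈ Set.range ι := by
  by_cases hx : x ∈ Set.range ι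
  · obtain ⟨a, rfl⟩ := hx
    simp only [Perm.viaEmbedding_apply, Set.mem_range_self]
  · rw [Perm.viaEmbedding_apply_of_notMem e ι x hx]

theorem exists_viaEmbedding_eq (ι : α ↪ β) (ρ : Perm β) (hρ : ∀ x ∉ Set.range ι, ρ x = x) :
    ∃ e : Perm α, e.viaEmbedding ι = ρ := by
  classical
  let φ : α ≃ Set.range ι := Equiv.ofInjective ι ι.injective
  let ρ' : Perm (Set.range ι) := (Perm.subtypeEquivSubtypePerm (· ∈ Set.range ι)).symm ⟨ρ, hρ⟩
  refine ⟨φ.symm.permCongr ρ', ?_⟩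
  ext x
  by_cases hx : x ∈ Set.range ι
  · obtain ⟨a, rfl⟩ := hx
    calc Perm.viaEmbedding (φ.symm.permCongr ρ') ι (ι a)
        = φ (φ.symm (ρ' (φ a))) := Perm.viaEmbedding_apply _ ι a
      _ = ρ (ι a) := by rw [φ.apply_symm_apply]; rfl
  · rw [Perm.viaEmbedding_apply_of_notMem _ ι x hx, hρ x hx]

end ViaEmbedding

section Factorization

variable {n m y : ℕ}

/-- The permutations of `Fin m`, embedded in those of `Fin n` as the ones fixing all letters
`≥ m`. -/
noncomputable def permLower (hmn : m ≤ n) : Perm (Fin m) →* Perm (Fin n) :=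
  Perm.viaEmbeddingHom (Fin.castLEEmb hmn)

/-- The inclusion of the top `n - y` letters of `Fin n`, as the shift by `y`. -/
def upperEmb (n y : ℕ) : Fin (n - y) ↪ Fin n where
  toFun s := ⟨y + s, by omega⟩
  inj' s t hst := by simpa [Fin.ext_iff] using hst

/-- The permutations of `Fin (n - y)`, embedded in those of `Fin n` as the ones fixing all letters
`< y`. -/
noncomputable def permUpper (n y : ℕ) : Perm (Fin (n - y)) →* Perm (Fin n) :=
  Perm.viaEmbeddingHom (upperEmb n y)

theorem mem_range_upperEmb {v : Fin n} : v ∈ Set.range (upperEmb n y) ↔ y ≤ (v : ℕ) := by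
  constructor
  · rintro ⟨s, rfl⟩
    exact Nat.le_add_right y s
  · intro hv
    exact ⟨⟨v - y, by omega⟩, Fin.ext (Nat.add_sub_cancel' hv)⟩

theorem mem_range_castLEEmb {hmn : m ≤ n} {t : Fin n} :
    t ∈ Set.range (Fin.castLEEmb hmn) ↔ (t : ℕ) < m :=
  Set.ext_iff.mp (Fin.range_castLE hmn) t

section permLower

variable (hmn : m ≤ n) (p : Perm (Fin m))

theorem permLower_castLE (t : Fin m) :
    permLower hmn p (t.castLE hmn) = (p t).castLE hmn :=
  Perm.viaEmbedding_apply p (Fin.castLEEmb hmn) t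

theorem permLower_of_le {t : Fin n} (ht : m ≤ (t : ℕ)) : permLower hmn p t = t :=
  Perm.viaEmbedding_apply_of_notMem p _ t fun h => (mem_range_castLEEmb.mp h).not_ge ht

theorem permLower_lt_iff (t : Fin n) : (permLower hmn p t : ℕ) < m ↔ (t : ℕ) < m := by
  rw [← mem_range_castLEEmb (hmn := hmn), ← mem_range_castLEEmb (hmn := hmn)]
  exact viaEmbedding_apply_mem_range_iff p _ t

theorem permLower_strictMonoOn (hmy : m ≤ y + 1) :
    StrictMonoOn (permLower hmn p) {t | y ≤ (t : ℕ)} := by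
  intro t (ht : y ≤ (t : ℕ)) u _ htu
  have hu : m ≤ (u : ℕ) := by omega
  have hiff := permLower_lt_iff hmn p t
  by_cases htm : (t : ℕ) < m
  · rw [permLower_of_le hmn p hu]
    omega
  · rwa [permLower_of_le hmn p hu, permLower_of_le hmn p (not_lt.mp htm)]

end permLower

section permUpper

variable (q : Perm (Fin (n - y)))

theorem permUpper_upperEmb (s : Fin (n - y)) :
    permUpper n y q (upperEmb n y s) = upperEmb n y (q s) :=
  Perm.viaEmbedding_apply q (upperEmb n y) s

theorem permUpper_of_lt {v : Fin n} (hv : (v : ℕ) < y) : permUpper n y q v = v :=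
  Perm.viaEmbedding_apply_of_notMem q _ v fun h => (mem_range_upperEmb.mp h).not_gt hv

theorem le_permUpper_iff (v : Fin n) : y ≤ (permUpper n y q v : ℕ) ↔ y ≤ (v : ℕ) := by
  rw [← mem_range_upperEmb, ← mem_range_upperEmb]
  exact viaEmbedding_apply_mem_range_iff q _ v

theorem permUpper_strictMonoOn (hmy : m ≤ y + 1) :
    StrictMonoOn (permUpper n y q) {v | (v : ℕ) < m} := by
  intro u _ v (hv : (v : ℕ) < m) huv
  have huy : (u : ℕ) < y := by omega
  have hiff := le_permUpper_iff q v
  by_cases hvy : (v : ℕ) < y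
  · rwa [permUpper_of_lt q huy, permUpper_of_lt q hvy]
  · rw [permUpper_of_lt q huy]
    omega

end permUpper

theorem disjoint_range_permUpper_permLower (hmn : m ≤ n) (hmy : m ≤ y + 1) :
    Disjoint (permUpper n y).range (permLower hmn).range := by
  rw [Subgroup.disjoint_def]
  rintro _ ⟨q, rfl⟩ ⟨p, hp⟩
  ext v
  rw [Perm.one_apply]
  by_cases hvy : (v : ℕ) < y
  · rw [permUpper_of_lt q hvy]
  by_cases hvm : (v : ℕ) < m
  · have hge := (le_permUpper_iff q v).mpr (not_lt.mp hvy)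
    have hlt := (permLower_lt_iff hmn p v).mpr hvm
    rw [hp] at hlt
    omega
  · rw [← hp, permLower_of_le hmn p (not_lt.mp hvm)]

/-- The permutation glued from `p` and `q`: their direct sum when `m = y`; when `m = y + 1`, the dot
of height `y` in `p` and the dot in column `0` of `q` are merged into one, which keeps the column of
the former and the (shifted) height of the latter. -/
noncomputable def glue (hmn : m ≤ n) (y : ℕ) (p : Perm (Fin m)) (q : Perm (Fin (n - y))) :
    Perm (Fin n) :=
  permUpper n y q * permLower hmn p

theorem glue_castLE (hmn : m ≤ n) (p : Perm (Fin m)) (q : Perm (Fin (n - y))) (t : Fin m) :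
    glue hmn y p q (t.castLE hmn) = permUpper n y q ((p t).castLE hmn) := by
  rw [glue, Perm.mul_apply, permLower_castLE]

theorem glue_permLower_inv_upperEmb (hmn : m ≤ n) (p : Perm (Fin m)) (q : Perm (Fin (n - y)))
    (s : Fin (n - y)) :
    glue hmn y p q (permLower hmn p⁻¹ (upperEmb n y s)) = upperEmb n y (q s) := by
  rw [glue, Perm.mul_apply, map_inv, Perm.inv_def, apply_symm_apply, permUpper_upperEmb]

theorem eq_and_eq_of_glue_eq (hmn : m ≤ n) (hmy : m ≤ y + 1) {p p' : Perm (Fin m)}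
    {q q' : Perm (Fin (n - y))} (h : glue hmn y p q = glue hmn y p' q') : p = p' ∧ q = q' := by
  have hinj := Subgroup.mul_injective_of_disjoint (disjoint_range_permUpper_permLower hmn hmy)
  have heq := @hinj (⟨_, q, rfl⟩, ⟨_, p, rfl⟩) (⟨_, q', rfl⟩, ⟨_, p', rfl⟩) h
  obtain ⟨hq, hp⟩ := Prod.mk.inj heq
  exact ⟨Perm.viaEmbeddingHom_injective _ (congrArg Subtype.val hp),
    Perm.viaEmbeddingHom_injective _ (congrArg Subtype.val hq)⟩

theorem exists_perm_castLE_eq (hym : y ≤ m) (hmn : m ≤ n) (π : Perm (Fin n))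
    (hπ : ∀ t, (π t : ℕ) < y → (t : ℕ) < m) :
    ∃ p : Perm (Fin m), ∀ t : Fin m, (π (t.castLE hmn) : ℕ) < y →
      (p t).castLE hmn = π (t.castLE hmn) := by
  let e : {t : Fin m // (π (t.castLE hmn) : ℕ) < y} ≃ {v : Fin m // (v : ℕ) < y} :=
    { toFun t := ⟨⟨π (t.1.castLE hmn), t.2.trans_le hym⟩, t.2⟩
      invFun v := ⟨⟨π.symm (v.1.castLE hmn), hπ _ (by simpa using v.2)⟩, by simpa using v.2⟩
      left_inv t := by simp
      right_inv v := by simp }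
  refine ⟨e.extendSubtype, fun t ht => ?_⟩
  rw [e.extendSubtype_apply_of_mem t ht]
  rfl

theorem exists_glue_eq (hym : y ≤ m) (hmn : m ≤ n) (π : Perm (Fin n))
    (hπ : ∀ t, (π t : ℕ) < y → (t : ℕ) < m) : ∃ p q, glue hmn y p q = π := by
  obtain ⟨p, hp⟩ := exists_perm_castLE_eq hym hmn π hπ
  have hfix : ∀ v ∉ Set.range (upperEmb n y), (π * (permLower hmn p)⁻¹) v = v := by
    intro v hv
    rw [mem_range_upperEmb, not_le] at hv
    let t : Fin m := ⟨π.symm v, hπ _ (by simpa using hv)⟩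
    have hπt : π (t.castLE hmn) = v := π.apply_symm_apply v
    have hpt : permLower hmn p (t.castLE hmn) = v := by
      rw [permLower_castLE, hp t (by rwa [hπt]), hπt]
    rw [Perm.mul_apply, Perm.inv_eq_iff_eq.mpr hpt.symm, hπt]
  obtain ⟨q, hq⟩ := exists_viaEmbedding_eq _ _ hfix
  exact ⟨p, q, mul_inv_eq_iff_eq_mul.mp hq.symm |>.symm⟩

end Factorization

section Cut

variable {n m y k : ℕ} {b : Fin n → ℕ}

/-- The part `Y'` of the diagram `b` inside its lower left `m × m` square. -/
def lowerPart (b : Fin n → ℕ) (hmn : m ≤ n) : Fin m → ℕ :=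
  fun t => min (b (t.castLE hmn)) m

/-- The part `Y''` of the diagram `b` above the first `y` rows and to the right of the first `y`
columns. -/
def upperPart (b : Fin n → ℕ) (y : ℕ) : Fin (n - y) → ℕ :=
  fun s => b (upperEmb n y s) - y

/-- The gap in the row lengths at height `y` along which `b` can be cut into `lowerPart` and
`upperPart`; an `i`-critical point at height `y` gives one with `m = y + i`. -/
structure IsCut (b : Fin n → ℕ) (y m : ℕ) : Prop where
  le_of_lt : ∀ v : Fin n, (v : ℕ) < y → b v ≤ m
  le_of_le : ∀ v : Fin n, y ≤ (v : ℕ) → m ≤ b v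

/-- `f` selects the columns of an occurrence of the pattern `τ` in `π` inside `b`. -/
def IsOccurrence (b : Fin n → ℕ) (π : Perm (Fin n)) (τ : Perm (Fin k)) (f : Fin k → Fin n) :
    Prop :=
  StrictMono f ∧ (∀ s t, τ s < τ t ↔ π (f s) < π (f t)) ∧ ∀ s t, (f s : ℕ) < b (π (f t))

namespace IsCut

theorem of_monotone (hmono : Monotone b) (hy : y + 1 < n) (hlow : b ⟨y, by omega⟩ ≤ m)
    (hhigh : m ≤ b ⟨y + 1, hy⟩) : IsCut b (y + 1) m where
  le_of_lt _ hv := (hmono (Fin.le_def.mpr (Nat.le_of_lt_succ hv))).trans hlow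
  le_of_le _ hv := hhigh.trans (hmono (Fin.le_def.mpr hv))

theorem lowerPart_eq (h : IsCut b m m) (hmn : m ≤ n) :
    lowerPart b hmn = fun t => b (t.castLE hmn) :=
  funext fun t => min_eq_left (h.le_of_lt _ t.isLt)

theorem lt_permUpper_castLE_iff (h : IsCut b y m) (hmn : m ≤ n) (q : Perm (Fin (n - y)))
    (t r : Fin m) :
    (t : ℕ) < b (permUpper n y q (r.castLE hmn)) ↔ (t : ℕ) < lowerPart b hmn r := by
  rw [lowerPart, lt_min_iff, and_iff_left t.isLt]
  by_cases hr : (r : ℕ) < y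
  · rw [permUpper_of_lt q hr]
  · have hyr : y ≤ (r.castLE hmn : ℕ) := not_lt.mp hr
    exact iff_of_true (t.isLt.trans_le (h.le_of_le _ ((le_permUpper_iff q _).mpr hyr)))
      (t.isLt.trans_le (h.le_of_le _ hyr))

theorem permLower_upperEmb_lt_iff (h : IsCut b y m) (hmn : m ≤ n) (p : Perm (Fin m))
    (s r : Fin (n - y)) :
    (permLower hmn p (upperEmb n y s) : ℕ) < b (upperEmb n y r) ↔
      (s : ℕ) < upperPart b y r := by
  have hb : m ≤ b (upperEmb n y r) := h.le_of_le _ (Nat.le_add_right y r)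
  rw [upperPart, Nat.lt_sub_iff_add_lt']
  have hiff := permLower_lt_iff hmn p (upperEmb n y s)
  by_cases hs : (upperEmb n y s : ℕ) < m
  · exact iff_of_true ((hiff.mpr hs).trans_le hb) (hs.trans_le hb)
  · rw [permLower_of_le hmn p (not_lt.mp hs)]
    rfl

theorem isTransversal_glue_iff (h : IsCut b y m) (hym : y ≤ m) (hmn : m ≤ n) (p : Perm (Fin m))
    (q : Perm (Fin (n - y))) :
    IsTransversal b (glue hmn y p q) ↔
      IsTransversal (lowerPart b hmn) p ∧ IsTransversal (upperPart b y) q := by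
  have hlower (t : Fin m) : (t.castLE hmn : ℕ) < b (glue hmn y p q (t.castLE hmn)) ↔
      (t : ℕ) < lowerPart b hmn (p t) := by
    rw [glue_castLE]
    exact h.lt_permUpper_castLE_iff hmn q t (p t)
  have hupper (s : Fin (n - y)) : (permLower hmn p⁻¹ (upperEmb n y s) : ℕ) <
      b (glue hmn y p q (permLower hmn p⁻¹ (upperEmb n y s))) ↔ (s : ℕ) < upperPart b y (q s) := by
    rw [glue_permLower_inv_upperEmb]
    exact h.permLower_upperEmb_lt_iff hmn p⁻¹ s (q s)
  refine ⟨fun hT => ⟨fun t => (hlower t).mp (hT _), fun s => (hupper s).mp (hT _)⟩, ?_⟩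
  rintro ⟨hp, hq⟩ t
  by_cases ht : (t : ℕ) < m
  · exact (hlower ⟨t, ht⟩).mpr (hp ⟨t, ht⟩)
  · obtain ⟨s, rfl⟩ := mem_range_upperEmb.mpr (hym.trans (not_lt.mp ht))
    rw [← permLower_of_le hmn p⁻¹ (not_lt.mp ht)]
    exact (hupper s).mpr (hq s)

theorem isOccurrence_castLE_iff (h : IsCut b y m) (hmy : m ≤ y + 1) (hmn : m ≤ n)
    (p : Perm (Fin m)) (q : Perm (Fin (n - y))) (τ : Perm (Fin k)) (f : Fin k → Fin m) :
    IsOccurrence b (glue hmn y p q) τ (fun s => (f s).castLE hmn) ↔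
      IsOccurrence (lowerPart b hmn) p τ f := by
  have horder (s t : Fin k) : glue hmn y p q ((f s).castLE hmn) < glue hmn y p q ((f t).castLE hmn)
      ↔ p (f s) < p (f t) := by
    rw [glue_castLE, glue_castLE]
    exact (permUpper_strictMonoOn q hmy).lt_iff_lt (p (f s)).isLt (p (f t)).isLt
  have hcell (s t : Fin k) : ((f s).castLE hmn : ℕ) < b (glue hmn y p q ((f t).castLE hmn)) ↔
      (f s : ℕ) < lowerPart b hmn (p (f t)) := by
    rw [glue_castLE]
    exact h.lt_permUpper_castLE_iff hmn q (f s) (p (f t))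
  simp only [IsOccurrence, horder, hcell]
  rfl

theorem isOccurrence_upperEmb_iff (h : IsCut b y m) (hmy : m ≤ y + 1) (hmn : m ≤ n)
    (p : Perm (Fin m)) (q : Perm (Fin (n - y))) (τ : Perm (Fin k)) (f : Fin k → Fin (n - y)) :
    IsOccurrence b (glue hmn y p q) τ (fun s => permLower hmn p⁻¹ (upperEmb n y (f s))) ↔
      IsOccurrence (upperPart b y) q τ f := by
  have upperEmb_lt (s t : Fin (n - y)) : upperEmb n y s < upperEmb n y t ↔ s < t :=
    Nat.add_lt_add_iff_left
  have hmono (s t : Fin k) : permLower hmn p⁻¹ (upperEmb n y (f s)) <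
      permLower hmn p⁻¹ (upperEmb n y (f t)) ↔ f s < f t := by
    rw [← upperEmb_lt]
    exact (permLower_strictMonoOn hmn p⁻¹ hmy).lt_iff_lt (Nat.le_add_right y _)
      (Nat.le_add_right y _)
  simp only [IsOccurrence, StrictMono, hmono, glue_permLower_inv_upperEmb, upperEmb_lt,
    h.permLower_upperEmb_lt_iff]

theorem exists_lower_or_upper_columns (h : IsCut b y m) (hmn : m ≤ n) {p : Perm (Fin m)}
    {q : Perm (Fin (n - y))} {τ : Perm (Fin k)} {f : Fin k → Fin n}
    (hf : IsOccurrence b (glue hmn y p q) τ f) :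
    (∃ g : Fin k → Fin m, f = fun s => (g s).castLE hmn) ∨
      ∃ g : Fin k → Fin (n - y), f = fun s => permLower hmn p⁻¹ (upperEmb n y (g s)) := by
  by_cases hlow : ∃ t, (glue hmn y p q (f t) : ℕ) < y
  · obtain ⟨t, ht⟩ := hlow
    exact .inl ⟨fun s => ⟨f s, (hf.2.2 s t).trans_le (h.le_of_lt _ ht)⟩, rfl⟩
  · push Not at hlow
    have hrange (s : Fin k) : permLower hmn p (f s) ∈ Set.range (upperEmb n y) :=
      mem_range_upperEmb.mpr ((le_permUpper_iff q _).mp (hlow s))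
    choose g hg using hrange
    refine .inr ⟨g, funext fun s => ?_⟩
    rw [hg, map_inv, Perm.inv_def, symm_apply_apply]

theorem containsIn_glue_iff (h : IsCut b y m) (hmy : m ≤ y + 1) (hmn : m ≤ n) (p : Perm (Fin m))
    (q : Perm (Fin (n - y))) (τ : Perm (Fin k)) :
    ContainsIn b (glue hmn y p q) τ ↔
      ContainsIn (lowerPart b hmn) p τ ∨ ContainsIn (upperPart b y) q τ := by
  constructor
  · rintro ⟨f, hf⟩
    rcases h.exists_lower_or_upper_columns hmn hf with ⟨g, rfl⟩ | ⟨g, rfl⟩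
    · exact .inl ⟨g, (h.isOccurrence_castLE_iff hmy hmn p q τ g).mp hf⟩
    · exact .inr ⟨g, (h.isOccurrence_upperEmb_iff hmy hmn p q τ g).mp hf⟩
  · rintro (⟨g, hg⟩ | ⟨g, hg⟩)
    · exact ⟨_, (h.isOccurrence_castLE_iff hmy hmn p q τ g).mpr hg⟩
    · exact ⟨_, (h.isOccurrence_upperEmb_iff hmy hmn p q τ g).mpr hg⟩

theorem avoids_glue_iff (h : IsCut b y m) (hym : y ≤ m) (hmy : m ≤ y + 1) (hmn : m ≤ n)
    (p : Perm (Fin m)) (q : Perm (Fin (n - y))) (τ : Perm (Fin k)) :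
    (IsTransversal b (glue hmn y p q) ∧ ¬ ContainsIn b (glue hmn y p q) τ) ↔
      (IsTransversal (lowerPart b hmn) p ∧ ¬ ContainsIn (lowerPart b hmn) p τ) ∧
        IsTransversal (upperPart b y) q ∧ ¬ ContainsIn (upperPart b y) q τ := by
  rw [h.isTransversal_glue_iff hym, h.containsIn_glue_iff hmy]
  tauto

end IsCut

end Cut

theorem stmt6_general {n m y k : ℕ} {b : Fin n → ℕ} (h : IsCut b y m) (hym : y ≤ m)
    (hmy : m ≤ y + 1) (hmn : m ≤ n) (τ : Perm (Fin k)) :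
    SYcard b τ = SYcard (lowerPart b hmn) τ * SYcard (upperPart b y) τ := by
  unfold SYcard
  rw [← Nat.card_prod]
  symm
  refine Nat.card_congr (Equiv.ofBijective (fun x => ⟨glue hmn y x.1.1 x.2.1,
    (h.avoids_glue_iff hym hmy hmn _ _ τ).mpr ⟨x.1.2, x.2.2⟩⟩) ⟨?_, ?_⟩)
  · rintro ⟨⟨p, hp⟩, q, hq⟩ ⟨⟨p', hp'⟩, q', hq'⟩ heq
    obtain ⟨rfl, rfl⟩ := eq_and_eq_of_glue_eq hmn hmy (congrArg Subtype.val heq)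
    rfl
  · rintro ⟨π, hπ⟩
    obtain ⟨p, q, rfl⟩ := exists_glue_eq hym hmn π fun t ht =>
      (hπ.1 t).trans (h.le_of_lt _ ht)
    obtain ⟨hp, hq⟩ := (h.avoids_glue_iff hym hmy hmn p q τ).mp hπ
    exact ⟨(⟨p, hp⟩, ⟨q, hq⟩), rfl⟩

theorem stmt6 (n : ℕ) (b : Fin n → ℕ) (hmono : Monotone b)
    (hb : ∀ y : Fin n, (y : ℕ) + 1 ≤ b y ∧ b y ≤ n)
    (k : ℕ) (σ : Equiv.Perm (Fin k))
    (j : ℕ) (hj : j + 1 < n)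
    (hcrit : b ⟨j, Nat.lt_of_succ_lt hj⟩ < b ⟨j + 1, hj⟩)
    (i : ℕ) (hi : i = 0 ∨ i = 1)
    (hidx : b ⟨j, Nat.lt_of_succ_lt hj⟩ = (j + 1) + i) :
    SYcard b σ =
      (if i = 0 then
        SYcard (fun t : Fin (j + 1) => b ⟨(t : ℕ), by have := t.isLt; omega⟩) σ
      else
        SYcard (fun t : Fin (j + 2) => min (b ⟨(t : ℕ), by have := t.isLt; omega⟩) (j + 2)) σ) *
      SYcard (fun s : Fin (n - (j + 1)) =>
        b ⟨(j + 1) + (s : ℕ), by have := s.isLt; omega⟩ - (j + 1)) σ := by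
  have hcut : IsCut b (j + 1) (j + 1 + i) := .of_monotone hmono hj hidx.le (hidx ▸ hcrit.le)
  rcases hi with rfl | rfl
  · exact hcut.lowerPart_eq (by omega) ▸ stmt6_general hcut le_rfl (by omega) (by omega) σ
  · exact stmt6_general hcut (by omega) le_rfl (by omega) σ
end

section
/- Let Y be a Young diagram of size n given by b, let σ be any permutation, and let y ∈ {1,…,n−1} satisfy b(y+1) > b(y) and b(y) = y + 2 (a 2-critical point of Y). Define the Young diagram Y' of size y + 2 by b'(t) = min(b(t), y+2) and the Young diagram Y'' of size n − y by b''(t) = b(y + t) − y. Then |S_Y(σ)| = |S^{↗}_{Y'}(σ)| · |S_{↗Y''}(σ)| + |S^{↘}_{Y'}(σ)| · |S_{↘Y''}(σ)|. -/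
/-
Put `a = y` and `r = b(y) - y`. The lowest `a` rows have at most `a + r` cells and the higher ones
at least `a + r`, so the dots of a transversal `π` in the lowest `a` rows lie in the first `a + r`
columns, and exactly `r` further dots lie in these columns. Let `p` be the relative order of the
dots in the first `a + r` columns, and `q` that of the dots above the lowest `a` rows; these are
transversals of `Y'` and `Y''`. The `r` dots that they share are the top `r` dots of `p` and the
leftmost `r` dots of `q`, and they have the same relative order `ρ` in both; conversely, any two
transversals that agree on `ρ` in this way glue to a unique `π`. A copy of `σ` in `Y` that uses a
dot of the lowest `a` rows is confined to the first `a + r` columns, and any other copy lies above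
these rows, so `π` avoids `σ` if and only if `p` and `q` do. Hence `|S_Y(σ)|` is a sum of products
over `ρ`. For `r = 2` the two possible orders `ρ` give the two terms of the theorem.
-/

open Equiv

/-! ### Relative orders of the dots in columns and rows -/

lemma strictMono_comp_sort {m : ℕ} {α : Type*} [LinearOrder α] {f : Fin m → α}
    (hf : Function.Injective f) : StrictMono (f ∘ Tuple.sort f) :=
  (Tuple.monotone_sort f).strictMono_of_injective (hf.comp (Tuple.sort f).injective)

lemma val_le_apply_of_strictMono {m n : ℕ} {g : Fin m → Fin n} (hg : StrictMono g) (t : Fin m) :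
    (t : ℕ) ≤ g t := by
  simpa using Finset.card_le_card_of_injOn g (s := Finset.Iio t) (t := Finset.Iio (g t))
    (fun s hs => by simpa using hg (by simpa using hs)) hg.injective.injOn

lemma val_apply_eq_of_strictMono {m n a : ℕ} {g : Fin m → Fin n} (hg : StrictMono g)
    (hrange : ∀ v : Fin n, (v : ℕ) < a → v ∈ Set.range g) (t : Fin m) (ht : (t : ℕ) < a) :
    (g t : ℕ) = t := by
  induction t using WellFoundedLT.induction with
  | ind t ih =>
    have hle := val_le_apply_of_strictMono hg t
    obtain ⟨s, hs⟩ := hrange ⟨t, hle.trans_lt (g t).isLt⟩ ht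
    have hs' : (g s : ℕ) = t := congrArg Fin.val hs
    rcases lt_trichotomy s t with h | rfl | h
    · have := ih s h ((Fin.lt_def.1 h).trans ht)
      omega
    · exact hs'
    · have : g t < g s := hg h
      omega

lemma perm_eq_of_lt_iff_lt {m : ℕ} {p q : Perm (Fin m)} (h : ∀ x y, p x < p y ↔ q x < q y) :
    p = q := by
  have hmono : StrictMono (p * q⁻¹) := fun x y hxy => by simpa [h] using hxy
  exact mul_inv_eq_one.1 ((Perm.monotone_iff _).1 hmono.monotone)

lemma exists_natAdd_eq {a l : ℕ} {x : Fin (a + l)} (hx : a ≤ (x : ℕ)) :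
    ∃ v : Fin l, Fin.natAdd a v = x :=
  ⟨⟨x - a, by omega⟩, Fin.ext (Nat.add_sub_of_le hx)⟩

/-- The relative order of the dots of `π` in the first `m` columns. It is an inverse because
`Tuple.sort` lists the columns by increasing height, while the pattern sends a column to the rank of
its height. -/
noncomputable def leftPattern {m n : ℕ} (h : m ≤ n) (π : Perm (Fin n)) : Perm (Fin m) :=
  (Tuple.sort (π ∘ Fin.castLE h))⁻¹

/-- The relative order of the dots of `π` in the top `l` rows, that is, at heights at least `a`.
No inverse occurs because sorting the rows by column lists the heights from left to right. -/
noncomputable def topPattern {a l : ℕ} (π : Perm (Fin (a + l))) : Perm (Fin l) :=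
  Tuple.sort (⇑π⁻¹ ∘ Fin.natAdd a)

/-- The column of the `s`-th dot from the left among the dots of `π` in the top `l` rows. -/
noncomputable def topColumn {a l : ℕ} (π : Perm (Fin (a + l))) (s : Fin l) : Fin (a + l) :=
  π⁻¹ (Fin.natAdd a (topPattern π s))

section LeftPattern
variable {m n : ℕ} (h : m ≤ n) (π : Perm (Fin n))

lemma strictMono_leftPattern_inv :
    StrictMono fun t => π (Fin.castLE h ((leftPattern h π)⁻¹ t)) := by
  have := strictMono_comp_sort (π.injective.comp (Fin.castLE_injective h))
  rwa [leftPattern, inv_inv]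

lemma leftPattern_lt_iff_lt (x y : Fin m) :
    leftPattern h π x < leftPattern h π y ↔ π (Fin.castLE h x) < π (Fin.castLE h y) := by
  simpa using ((strictMono_leftPattern_inv h π).lt_iff_lt
    (a := leftPattern h π x) (b := leftPattern h π y)).symm

lemma leftPattern_le (x : Fin m) : (leftPattern h π x : ℕ) ≤ π (Fin.castLE h x) := by
  simpa using val_le_apply_of_strictMono (strictMono_leftPattern_inv h π) (leftPattern h π x)

end LeftPattern

section TopPattern
variable {a l : ℕ} (π : Perm (Fin (a + l)))

lemma strictMono_topColumn : StrictMono (topColumn π) :=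
  strictMono_comp_sort (π⁻¹.injective.comp (Fin.natAdd_injective l a))

@[simp]
lemma apply_topColumn (s : Fin l) : π (topColumn π s) = Fin.natAdd a (topPattern π s) := by
  simp [topColumn]

lemma range_eq_of_apply_eq_natAdd {π : Perm (Fin (a + l))} {e : Fin l → Fin (a + l)}
    {q : Perm (Fin l)} (he : ∀ s, π (e s) = Fin.natAdd a (q s)) :
    Set.range e = {x | a ≤ (π x : ℕ)} := by
  ext x
  constructor
  · rintro ⟨s, rfl⟩
    simp [he]
  · intro hx
    obtain ⟨v, hv⟩ := exists_natAdd_eq hx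
    exact ⟨q⁻¹ v, π.injective (by simp [he, hv])⟩

lemma mem_range_topColumn_iff {x : Fin (a + l)} : x ∈ Set.range (topColumn π) ↔ a ≤ (π x : ℕ) := by
  rw [range_eq_of_apply_eq_natAdd (apply_topColumn π), Set.mem_ofPred_eq]

lemma topPattern_eq_of_strictMono {π : Perm (Fin (a + l))} {e : Fin l → Fin (a + l)}
    (hmono : StrictMono e) {q : Perm (Fin l)} (he : ∀ s, π (e s) = Fin.natAdd a (q s)) :
    topPattern π = q := by
  have hcol : topColumn π = e := ((strictMono_topColumn π).range_inj hmono).1 <|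
    (range_eq_of_apply_eq_natAdd (apply_topColumn π)).trans (range_eq_of_apply_eq_natAdd he).symm
  ext1 s
  exact Fin.natAdd_injective l a <| by rw [← apply_topColumn, hcol, he]

end TopPattern

/-! ### Gluing along `r` dots -/

section Gluing
variable {a r l : ℕ} (h : a + r ≤ a + l)

/-- The columns of `Y''` as columns of `Y`, read off from the left half `p` of a transversal: the
first `r` columns of `Y''` are those in which `p` has its top `r` dots, and the others are shifted
by `a`. -/
noncomputable def glueColumn (p : Perm (Fin (a + r))) (s : Fin l) : Fin (a + l) :=
  if hs : (s : ℕ) < r then Fin.castLE h (topColumn p ⟨s, hs⟩) else Fin.natAdd a s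

lemma glueColumn_castLE (p : Perm (Fin (a + r))) (s : Fin r) :
    glueColumn h p (Fin.castLE (Nat.le_of_add_le_add_left h) s)
      = Fin.castLE h (topColumn p s) := by
  simp [glueColumn]

lemma glueColumn_of_le (p : Perm (Fin (a + r))) {s : Fin l} (hs : r ≤ (s : ℕ)) :
    glueColumn h p s = Fin.natAdd a s := by
  simp [glueColumn, hs.not_gt]

lemma strictMono_glueColumn (p : Perm (Fin (a + r))) : StrictMono (glueColumn h p) := by
  intro s t hst
  have hst' : (s : ℕ) < t := hst
  rcases lt_or_ge (t : ℕ) r with ht | ht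
  · simpa [glueColumn, ht, hst'.trans ht] using strictMono_topColumn p (by simpa using hst)
  rw [glueColumn_of_le h p ht]
  rcases lt_or_ge (s : ℕ) r with hs | hs
  · have := (topColumn p ⟨s, hs⟩).isLt
    simp only [glueColumn, hs, dite_true, Fin.lt_def, Fin.val_castLE, Fin.val_natAdd]
    omega
  · simpa [glueColumn_of_le h p hs] using hst

lemma mem_range_glueColumn_iff (p : Perm (Fin (a + r))) {x : Fin (a + l)} :
    x ∈ Set.range (glueColumn h p) ↔ ∀ hx : (x : ℕ) < a + r, a ≤ (p ⟨x, hx⟩ : ℕ) := by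
  constructor
  · rintro ⟨s, rfl⟩ hx
    have hs : (s : ℕ) < r := by
      by_contra! hs
      rw [glueColumn_of_le h p hs, Fin.val_natAdd] at hx
      omega
    simp [glueColumn, hs]
  · intro hx
    rcases lt_or_ge (x : ℕ) (a + r) with hlt | hge
    · obtain ⟨s, hs⟩ := (mem_range_topColumn_iff p).2 (hx hlt)
      exact ⟨_, (glueColumn_castLE h p s).trans (by rw [hs]; rfl)⟩
    · have hle : a ≤ (x : ℕ) := by omega
      obtain ⟨s, rfl⟩ := exists_natAdd_eq hle
      exact ⟨s, glueColumn_of_le h p (by simpa using hge)⟩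

end Gluing

/-- The dots of `π` in the lowest `a` rows lie in the first `a + r` columns. -/
def LowDotsLeft {a l : ℕ} (r : ℕ) (π : Perm (Fin (a + l))) : Prop :=
  ∀ x, (π x : ℕ) < a → (x : ℕ) < a + r

namespace LowDotsLeft
variable {a r l : ℕ} {π : Perm (Fin (a + l))} (h : a + r ≤ a + l)

lemma apply_castLE (hπ : LowDotsLeft r π) {x : Fin (a + r)} (hx : (leftPattern h π x : ℕ) < a) :
    π (Fin.castLE h x) = Fin.castLE h (leftPattern h π x) := by
  have hrange : ∀ v : Fin (a + l), (v : ℕ) < a →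
      v ∈ Set.range fun t => π (Fin.castLE h ((leftPattern h π)⁻¹ t)) := fun v hv =>
    have hlt : ((π⁻¹ v : Fin _) : ℕ) < a + r := hπ _ (by simpa using hv)
    ⟨leftPattern h π ⟨_, hlt⟩, by simp⟩
  simpa [Fin.ext_iff] using
    val_apply_eq_of_strictMono (strictMono_leftPattern_inv h π) hrange _ hx

lemma le_leftPattern_iff (hπ : LowDotsLeft r π) (x : Fin (a + r)) :
    a ≤ (leftPattern h π x : ℕ) ↔ a ≤ (π (Fin.castLE h x) : ℕ) := by
  refine ⟨fun hx => hx.trans (leftPattern_le h π x), fun hx => ?_⟩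
  by_contra! hlt
  rw [hπ.apply_castLE h hlt, Fin.val_castLE] at hx
  omega

lemma topColumn_eq (hπ : LowDotsLeft r π) : topColumn π = glueColumn h (leftPattern h π) := by
  refine ((strictMono_topColumn π).range_inj (strictMono_glueColumn h _)).1 ?_
  ext x
  rw [mem_range_topColumn_iff, mem_range_glueColumn_iff]
  exact ⟨fun hx hlt => (hπ.le_leftPattern_iff h ⟨x, hlt⟩).2 hx,
    fun hx => by_contra fun hlow => hlow <|
      (hπ.le_leftPattern_iff h ⟨x, hπ x (not_le.1 hlow)⟩).1 (hx _)⟩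

lemma topPattern_leftPattern (hπ : LowDotsLeft r π) :
    topPattern (leftPattern h π)
      = leftPattern (Nat.le_of_add_le_add_left h) (topPattern π) := by
  have hcol : ∀ s : Fin r, Fin.castLE h (topColumn (leftPattern h π) s)
      = topColumn π (Fin.castLE (Nat.le_of_add_le_add_left h) s) := fun s => by
    rw [hπ.topColumn_eq h, glueColumn_castLE]
  refine perm_eq_of_lt_iff_lt fun s t => ?_
  rw [← Fin.natAdd_lt_natAdd_iff a, ← apply_topColumn, ← apply_topColumn, leftPattern_lt_iff_lt,
    hcol, hcol, apply_topColumn, apply_topColumn, Fin.natAdd_lt_natAdd_iff, leftPattern_lt_iff_lt]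

lemma eq_of_patterns_eq {π' : Perm (Fin (a + l))} (hπ : LowDotsLeft r π) (hπ' : LowDotsLeft r π')
    (hleft : leftPattern h π = leftPattern h π') (htop : topPattern π = topPattern π') :
    π = π' := by
  ext1 x
  rcases lt_or_ge (π x : ℕ) a with hx | hx
  · obtain ⟨y, rfl⟩ : ∃ y, Fin.castLE h y = x := ⟨⟨x, hπ x hx⟩, rfl⟩
    have hy : (leftPattern h π y : ℕ) < a := by
      rwa [← not_le, hπ.le_leftPattern_iff, not_le]
    rw [hπ.apply_castLE h hy, hπ'.apply_castLE h (hleft ▸ hy), hleft]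
  · obtain ⟨s, rfl⟩ := (mem_range_topColumn_iff π).2 hx
    have hcol : topColumn π = topColumn π' := by
      rw [hπ.topColumn_eq h, hπ'.topColumn_eq h, hleft]
    rw [apply_topColumn, hcol, apply_topColumn, htop]

end LowDotsLeft

section GluingPatterns
variable {a r l : ℕ} (h : a + r ≤ a + l) {p : Perm (Fin (a + r))} {q : Perm (Fin l)}

lemma exists_perm_glue (p : Perm (Fin (a + r))) (q : Perm (Fin l)) :
    ∃ π : Perm (Fin (a + l)), (∀ s, π (glueColumn h p s) = Fin.natAdd a (q s)) ∧
      ∀ v : Fin a, π (Fin.castLE h (p⁻¹ (Fin.castAdd r v))) = Fin.castAdd l v := by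
  let column : Fin (a + l) → Fin (a + l) :=
    Fin.append (fun v => Fin.castLE h (p⁻¹ (Fin.castAdd r v))) (glueColumn h p ∘ ⇑q⁻¹)
  have hinj : Function.Injective column := Fin.append_injective_iff.2
    ⟨(Fin.castLE_injective h).comp (p⁻¹.injective.comp (Fin.castAdd_injective a r)),
      (strictMono_glueColumn h p).injective.comp q⁻¹.injective, fun v s heq => by
        have hle := (mem_range_glueColumn_iff h p).1 ⟨_, heq.symm⟩ (p⁻¹ _).isLt
        have hlt : ((Fin.castAdd r v : Fin (a + r)) : ℕ) < a := v.isLt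
        exact hlt.not_ge (by simpa using hle)⟩
  let π := (Equiv.ofBijective column (Finite.injective_iff_bijective.1 hinj))⁻¹
  refine ⟨π, fun s => ?_, fun v => ?_⟩ <;> rw [Perm.inv_eq_iff_eq]
  · simp [column]
  · simp [column]

section
variable {π : Perm (Fin (a + l))} (htop : ∀ s, π (glueColumn h p s) = Fin.natAdd a (q s))
include htop

lemma le_apply_iff_of_glue (x : Fin (a + l)) :
    a ≤ (π x : ℕ) ↔ ∀ hx : (x : ℕ) < a + r, a ≤ (p ⟨x, hx⟩ : ℕ) := by
  rw [← mem_range_glueColumn_iff h, range_eq_of_apply_eq_natAdd htop, Set.mem_ofPred_eq]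

lemma lowDotsLeft_of_glue : LowDotsLeft r π := by
  intro x hx
  by_contra! hxr
  exact hx.not_ge ((le_apply_iff_of_glue h htop x).2 fun hlt => absurd hlt hxr.not_gt)

lemma leftPattern_eq_of_glue
    (hbot : ∀ v : Fin a, π (Fin.castLE h (p⁻¹ (Fin.castAdd r v))) = Fin.castAdd l v)
    (hpq : topPattern p = leftPattern (Nat.le_of_add_le_add_left h) q) :
    leftPattern h π = p := by
  have hlow : ∀ x, (p x : ℕ) < a → π (Fin.castLE h x) = Fin.castLE h (p x) := fun x hx => by
    have hinv : p⁻¹ (Fin.castAdd r ⟨p x, hx⟩) = x := p.symm_apply_apply x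
    have hx' := hbot ⟨p x, hx⟩
    rw [hinv] at hx'
    exact hx'
  have hhigh : ∀ s, π (Fin.castLE h (topColumn p s))
      = Fin.natAdd a (q (Fin.castLE (Nat.le_of_add_le_add_left h) s)) := fun s => by
    rw [← glueColumn_castLE, htop]
  have hle : ∀ x, a ≤ (p x : ℕ) → a ≤ (π (Fin.castLE h x) : ℕ) := fun x hx =>
    (le_apply_iff_of_glue h htop _).2 fun _ => hx
  refine perm_eq_of_lt_iff_lt fun x y => ?_
  rw [leftPattern_lt_iff_lt]
  rcases lt_or_ge (p x : ℕ) a with hx | hx <;> rcases lt_or_ge (p y : ℕ) a with hy | hy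
  · rw [hlow x hx, hlow y hy, Fin.castLE_lt_castLE_iff]
  · have := hle y hy
    rw [hlow x hx, Fin.lt_def, Fin.lt_def, Fin.val_castLE]
    omega
  · have := hle x hx
    rw [hlow y hy, Fin.lt_def, Fin.lt_def, Fin.val_castLE]
    omega
  · obtain ⟨s, rfl⟩ := (mem_range_topColumn_iff p).2 hx
    obtain ⟨t, rfl⟩ := (mem_range_topColumn_iff p).2 hy
    simp only [hhigh, apply_topColumn, Fin.natAdd_lt_natAdd_iff, hpq, leftPattern_lt_iff_lt]

end

lemma exists_lowDotsLeft_of_patterns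
    (hpq : topPattern p = leftPattern (Nat.le_of_add_le_add_left h) q) :
    ∃ π : Perm (Fin (a + l)), LowDotsLeft r π ∧ leftPattern h π = p ∧ topPattern π = q := by
  obtain ⟨π, htop, hbot⟩ := exists_perm_glue h p q
  exact ⟨π, lowDotsLeft_of_glue h htop, leftPattern_eq_of_glue h htop hbot hpq,
    topPattern_eq_of_strictMono (strictMono_glueColumn h p) htop⟩

end GluingPatterns

/-! ### Diagrams and patterns -/

/-- The transversal `p` of the diagram `b'` is cut out of the transversal `π` of the diagram `b` by
the columns `c`: dots and cells of `b'` are compared exactly like their images in `b`. -/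
structure IsRestriction {m n : ℕ} (b : Fin n → ℕ) (π : Perm (Fin n)) (b' : Fin m → ℕ)
    (p : Perm (Fin m)) (c : Fin m → Fin n) : Prop where
  strictMono : StrictMono c
  lt_iff_lt : ∀ x y, p x < p y ↔ π (c x) < π (c y)
  cell_iff : ∀ x y : Fin m, (x : ℕ) + 1 ≤ b' (p y) ↔ (c x : ℕ) + 1 ≤ b (π (c y))

namespace IsRestriction
variable {m n k : ℕ} {b : Fin n → ℕ} {π : Perm (Fin n)} {b' : Fin m → ℕ} {p : Perm (Fin m)}
  {c : Fin m → Fin n} {σ : Perm (Fin k)}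

lemma isTransversal_iff (hc : IsRestriction b π b' p c) :
    IsTransversal b' p ↔ ∀ x, (c x : ℕ) + 1 ≤ b (π (c x)) :=
  forall_congr' fun x => hc.cell_iff x x

lemma containsIn_iff (hc : IsRestriction b π b' p c) :
    ContainsIn b' p σ ↔ ∃ f : Fin k → Fin m, StrictMono (c ∘ f) ∧
      (∀ s t, σ s < σ t ↔ π (c (f s)) < π (c (f t))) ∧
      ∀ s t, (c (f s) : ℕ) + 1 ≤ b (π (c (f t))) := by
  have hmono (f : Fin k → Fin m) : StrictMono f ↔ StrictMono (c ∘ f) :=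
    ⟨hc.strictMono.comp, fun hf _ _ hst => hc.strictMono.lt_iff_lt.1 (hf hst)⟩
  simp only [ContainsIn, hmono, hc.lt_iff_lt, hc.cell_iff]

lemma containsIn (hc : IsRestriction b π b' p c) (hp : ContainsIn b' p σ) : ContainsIn b π σ :=
  let ⟨f, hf⟩ := hc.containsIn_iff.1 hp
  ⟨c ∘ f, hf⟩

end IsRestriction

lemma isTransversal_iff_of_cover {m m' n : ℕ} {b : Fin n → ℕ} {π : Perm (Fin n)}
    {b' : Fin m → ℕ} {p : Perm (Fin m)} {c : Fin m → Fin n} (hc : IsRestriction b π b' p c)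
    {b'' : Fin m' → ℕ} {q : Perm (Fin m')} {d : Fin m' → Fin n} (hd : IsRestriction b π b'' q d)
    (hcover : ∀ x, x ∈ Set.range c ∨ x ∈ Set.range d) :
    IsTransversal b π ↔ IsTransversal b' p ∧ IsTransversal b'' q := by
  rw [hc.isTransversal_iff, hd.isTransversal_iff]
  refine ⟨fun H => ⟨fun x => H _, fun x => H _⟩, fun ⟨H, H'⟩ x => ?_⟩
  rcases hcover x with ⟨y, rfl⟩ | ⟨y, rfl⟩
  exacts [H y, H' y]

/-- The part `Y'` of the Young diagram `b` in its first `a + r` columns and lowest `a + r` rows. -/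
def lowerDiagram {a l : ℕ} (r : ℕ) (h : a + r ≤ a + l) (b : Fin (a + l) → ℕ) :
    Fin (a + r) → ℕ :=
  fun t => min (b (Fin.castLE h t)) (a + r)

/-- The part `Y''` of the Young diagram `b` above its lowest `a` rows, without its first `a`
columns. -/
def upperDiagram {a l : ℕ} (b : Fin (a + l) → ℕ) : Fin l → ℕ :=
  fun s => b (Fin.natAdd a s) - a

section Diagrams
variable {a r l k : ℕ} {b : Fin (a + l) → ℕ} {π : Perm (Fin (a + l))}

lemma IsTransversal.lowDotsLeft (hπ : IsTransversal b π)
    (hlow : ∀ v : Fin (a + l), (v : ℕ) < a → b v ≤ a + r) : LowDotsLeft r π := fun x hx =>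
  (hπ x).trans (hlow _ hx)

variable (h : a + r ≤ a + l)

lemma LowDotsLeft.isRestriction_leftPattern (hπ : LowDotsLeft r π)
    (hhigh : ∀ v : Fin (a + l), a ≤ (v : ℕ) → a + r ≤ b v) :
    IsRestriction b π (lowerDiagram r h b) (leftPattern h π) (Fin.castLE h) where
  strictMono := Fin.strictMono_castLE h
  lt_iff_lt := leftPattern_lt_iff_lt h π
  cell_iff x y := by
    have hx : (x : ℕ) + 1 ≤ a + r := x.isLt
    rw [lowerDiagram, le_min_iff, and_iff_left hx, Fin.val_castLE]
    rcases lt_or_ge (leftPattern h π y : ℕ) a with hy | hy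
    · rw [hπ.apply_castLE h hy]
    · exact iff_of_true (hx.trans (hhigh _ hy))
        (hx.trans (hhigh _ ((hπ.le_leftPattern_iff h y).1 hy)))

include h in
lemma LowDotsLeft.isRestriction_topPattern (hπ : LowDotsLeft r π)
    (hhigh : ∀ v : Fin (a + l), a ≤ (v : ℕ) → a + r ≤ b v) :
    IsRestriction b π (upperDiagram b) (topPattern π) (topColumn π) where
  strictMono := strictMono_topColumn π
  lt_iff_lt s t := by rw [apply_topColumn, apply_topColumn, Fin.natAdd_lt_natAdd_iff]
  cell_iff s t := by
    have hb : a + r ≤ b (Fin.natAdd a (topPattern π t)) := hhigh _ (Fin.le_coe_natAdd _ _)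
    rw [apply_topColumn, hπ.topColumn_eq h, upperDiagram]
    rcases lt_or_ge (s : ℕ) r with hs | hs
    · have := (topColumn (leftPattern h π) ⟨s, hs⟩).isLt
      simp only [glueColumn, hs, dite_true, Fin.val_castLE]
      omega
    · rw [glueColumn_of_le h _ hs, Fin.val_natAdd]
      omega

lemma LowDotsLeft.isTransversal_iff (hπ : LowDotsLeft r π)
    (hhigh : ∀ v : Fin (a + l), a ≤ (v : ℕ) → a + r ≤ b v) :
    IsTransversal b π ↔ IsTransversal (lowerDiagram r h b) (leftPattern h π) ∧
      IsTransversal (upperDiagram b) (topPattern π) := by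
  refine isTransversal_iff_of_cover (hπ.isRestriction_leftPattern h hhigh)
    (hπ.isRestriction_topPattern h hhigh) fun x => ?_
  rcases lt_or_ge (π x : ℕ) a with hx | hx
  · exact Or.inl ⟨⟨x, hπ x hx⟩, rfl⟩
  · exact Or.inr ((mem_range_topColumn_iff π).2 hx)

lemma LowDotsLeft.containsIn_iff (hπ : LowDotsLeft r π)
    (hlow : ∀ v : Fin (a + l), (v : ℕ) < a → b v ≤ a + r)
    (hhigh : ∀ v : Fin (a + l), a ≤ (v : ℕ) → a + r ≤ b v) {σ : Perm (Fin k)} :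
    ContainsIn b π σ ↔ ContainsIn (lowerDiagram r h b) (leftPattern h π) σ ∨
      ContainsIn (upperDiagram b) (topPattern π) σ := by
  have hleft := hπ.isRestriction_leftPattern h hhigh
  have htop := hπ.isRestriction_topPattern h hhigh
  refine ⟨fun ⟨f, hf⟩ => ?_, fun H => H.elim hleft.containsIn htop.containsIn⟩
  by_cases hdot : ∃ t, (π (f t) : ℕ) < a
  · obtain ⟨t, ht⟩ := hdot
    have hcol (s) : (f s : ℕ) < a + r := (hf.2.2 s t).trans (hlow _ ht)
    exact Or.inl (hleft.containsIn_iff.2 ⟨fun s => ⟨f s, hcol s⟩, hf⟩)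
  · push Not at hdot
    choose g hg using fun t => (mem_range_topColumn_iff π).2 (hdot t)
    obtain rfl : topColumn π ∘ g = f := funext hg
    exact Or.inr (htop.containsIn_iff.2 ⟨g, hf⟩)

end Diagrams

/-! ### Counting -/

/-- The set `S_Y(σ)` of transversals of the Young diagram `b` avoiding `σ` in it. -/
def avoiders {n k : ℕ} (b : Fin n → ℕ) (σ : Perm (Fin k)) : Set (Perm (Fin n)) :=
  {π | IsTransversal b π ∧ ¬ ContainsIn b π σ}

/-- The number of `σ`-avoiding transversals of the Young diagram `b` whose dots in the top `r` rows
are in the relative order `ρ`; the cases `r = 2` are `S^↗_Y(σ)` and `S^↘_Y(σ)`. -/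
noncomputable def SYcardTop {a r k : ℕ} (b : Fin (a + r) → ℕ) (σ : Perm (Fin k))
    (ρ : Perm (Fin r)) : ℕ :=
  Nat.card {p : avoiders b σ // topPattern p.1 = ρ}

/-- The number of `σ`-avoiding transversals of the Young diagram `b` whose dots in the first `r`
columns are in the relative order `ρ`; the cases `r = 2` are `S_{↗Y}(σ)` and `S_{↘Y}(σ)`. -/
noncomputable def SYcardLeft {r l k : ℕ} (h : r ≤ l) (b : Fin l → ℕ) (σ : Perm (Fin k))
    (ρ : Perm (Fin r)) : ℕ :=
  Nat.card {q : avoiders b σ // leftPattern h q.1 = ρ}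

lemma card_pullback_eq_sum {X Y Z : Type*} [Finite X] [Finite Y] [Fintype Z] (f : X → Z)
    (g : Y → Z) :
    Nat.card (f.Pullback g) = ∑ z, Nat.card {x // f x = z} * Nat.card {y // g y = z} := by
  simp only [← Nat.card_prod, ← Nat.card_sigma]
  exact Nat.card_congr
    { toFun := fun w => ⟨f w.1.1, ⟨w.1.1, rfl⟩, ⟨w.1.2, w.2.symm⟩⟩
      invFun := fun w => ⟨(w.2.1.1, w.2.2.1), w.2.1.2.trans w.2.2.2.symm⟩
      left_inv := fun _ => rfl
      right_inv := by rintro ⟨_, ⟨x, rfl⟩, ⟨y, hy⟩⟩; rfl }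

section Counting
variable {a r l k : ℕ} (h : a + r ≤ a + l) {b : Fin (a + l) → ℕ}
  (hlow : ∀ v : Fin (a + l), (v : ℕ) < a → b v ≤ a + r)
  (hhigh : ∀ v : Fin (a + l), a ≤ (v : ℕ) → a + r ≤ b v) {σ : Perm (Fin k)}
include hlow hhigh

lemma LowDotsLeft.mem_avoiders_iff {π : Perm (Fin (a + l))} (hπ : LowDotsLeft r π) :
    π ∈ avoiders b σ ↔ leftPattern h π ∈ avoiders (lowerDiagram r h b) σ ∧
      topPattern π ∈ avoiders (upperDiagram b) σ := by
  simp only [avoiders, Set.mem_ofPred_eq, hπ.isTransversal_iff h hhigh,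
    hπ.containsIn_iff h hlow hhigh, not_or]
  exact and_and_and_comm

lemma card_avoiders_eq_card_pullback :
    Nat.card (avoiders b σ) =
      Nat.card (Function.Pullback (fun p : avoiders (lowerDiagram r h b) σ => topPattern p.1)
        (fun q : avoiders (upperDiagram b) σ =>
          leftPattern (Nat.le_of_add_le_add_left h) q.1)) := by
  have hld (π : avoiders b σ) : LowDotsLeft r π.1 := π.2.1.lowDotsLeft hlow
  have hmem (π : avoiders b σ) := ((hld π).mem_avoiders_iff h hlow hhigh).1 π.2
  refine Nat.card_eq_of_bijective (fun π => ⟨(⟨_, (hmem π).1⟩, ⟨_, (hmem π).2⟩),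
    (hld π).topPattern_leftPattern h⟩) ⟨fun π π' heq => ?_, fun ⟨⟨⟨p, hp⟩, ⟨q, hq⟩⟩, hpq⟩ => ?_⟩
  · simp only [Subtype.mk.injEq, Prod.mk.injEq] at heq
    exact Subtype.ext ((hld π).eq_of_patterns_eq h (hld π') heq.1 heq.2)
  · obtain ⟨π, hπ, rfl, rfl⟩ := exists_lowDotsLeft_of_patterns h hpq
    exact ⟨⟨π, (hπ.mem_avoiders_iff h hlow hhigh).2 ⟨hp, hq⟩⟩, rfl⟩

theorem SYcard_eq_sum :
    SYcard b σ = ∑ ρ : Perm (Fin r), SYcardTop (lowerDiagram r h b) σ ρ *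
      SYcardLeft (Nat.le_of_add_le_add_left h) (upperDiagram b) σ ρ :=
  (card_avoiders_eq_card_pullback h hlow hhigh).trans (card_pullback_eq_sum _ _)

end Counting

lemma SYcard_eq_sum_of_add_eq {n a r l k : ℕ} (hn : a + l = n) (hr : a + r ≤ n) {b : Fin n → ℕ}
    (hlow : ∀ y : Fin n, (y : ℕ) < a → b y ≤ a + r)
    (hhigh : ∀ y : Fin n, a ≤ (y : ℕ) → a + r ≤ b y) {σ : Perm (Fin k)} :
    SYcard b σ = ∑ ρ : Perm (Fin r),
      SYcardTop (fun t : Fin (a + r) => min (b ⟨t, by omega⟩) (a + r)) σ ρ *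
        SYcardLeft (by omega) (fun s : Fin l => b ⟨a + s, by omega⟩ - a) σ ρ := by
  subst hn
  exact SYcard_eq_sum hr hlow hhigh

/-! ### The case `r = 2` -/

section IndexTwo
variable {a l k : ℕ} {σ : Perm (Fin k)}

lemma topPattern_inv_lt_iff_lt (π : Perm (Fin (a + l))) (u v : Fin l) :
    (topPattern π)⁻¹ u < (topPattern π)⁻¹ v ↔ π⁻¹ (Fin.natAdd a u) < π⁻¹ (Fin.natAdd a v) := by
  simpa [topColumn] using ((strictMono_topColumn π).lt_iff_lt
    (a := (topPattern π)⁻¹ u) (b := (topPattern π)⁻¹ v)).symm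

lemma forall_top_two_iff {P : Fin (a + 2) → Fin (a + 2) → Prop} :
    (∀ u v : Fin (a + 2), (u : ℕ) + 1 = a + 2 → (v : ℕ) + 2 = a + 2 → P u v) ↔
      P (Fin.natAdd a 1) (Fin.natAdd a 0) := by
  refine ⟨fun H => H _ _ rfl rfl, fun H u v hu hv => ?_⟩
  obtain rfl : u = Fin.natAdd a 1 := Fin.ext (Nat.succ_injective hu)
  obtain rfl : v = Fin.natAdd a 0 := Fin.ext (Nat.add_right_cancel hv)
  exact H

lemma forall_left_two_iff (h : 2 ≤ l) {P : Fin l → Fin l → Prop} :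
    (∀ i j : Fin l, (i : ℕ) = 0 → (j : ℕ) = 1 → P i j) ↔
      P (Fin.castLE h 0) (Fin.castLE h 1) := by
  refine ⟨fun H => H _ _ rfl rfl, fun H i j hi hj => ?_⟩
  obtain rfl : i = Fin.castLE h 0 := Fin.ext hi
  obtain rfl : j = Fin.castLE h 1 := Fin.ext hj
  exact H

lemma perm_fin_two_eq_one_iff : ∀ ρ : Perm (Fin 2), ρ = 1 ↔ ρ 0 < ρ 1 := by decide

lemma perm_fin_two_eq_swap_iff : ∀ ρ : Perm (Fin 2), ρ = swap 0 1 ↔ ρ 1 < ρ 0 := by decide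

lemma topPattern_eq_one_iff (π : Perm (Fin (a + 2))) :
    topPattern π = 1 ↔
      ∀ u v : Fin (a + 2), (u : ℕ) + 1 = a + 2 → (v : ℕ) + 2 = a + 2 → π⁻¹ v < π⁻¹ u := by
  rw [forall_top_two_iff, ← topPattern_inv_lt_iff_lt, ← perm_fin_two_eq_one_iff, inv_eq_one]

lemma topPattern_eq_swap_iff (π : Perm (Fin (a + 2))) :
    topPattern π = swap 0 1 ↔
      ∀ u v : Fin (a + 2), (u : ℕ) + 1 = a + 2 → (v : ℕ) + 2 = a + 2 → π⁻¹ u < π⁻¹ v := by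
  rw [forall_top_two_iff, ← topPattern_inv_lt_iff_lt, ← perm_fin_two_eq_swap_iff, inv_eq_iff_eq_inv,
    swap_inv]

lemma leftPattern_eq_one_iff (h : 2 ≤ l) (π : Perm (Fin l)) :
    leftPattern h π = 1 ↔ ∀ i j : Fin l, (i : ℕ) = 0 → (j : ℕ) = 1 → π i < π j := by
  rw [forall_left_two_iff h, ← leftPattern_lt_iff_lt, perm_fin_two_eq_one_iff]

lemma leftPattern_eq_swap_iff (h : 2 ≤ l) (π : Perm (Fin l)) :
    leftPattern h π = swap 0 1 ↔ ∀ i j : Fin l, (i : ℕ) = 0 → (j : ℕ) = 1 → π j < π i := by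
  rw [forall_left_two_iff h, ← leftPattern_lt_iff_lt, perm_fin_two_eq_swap_iff]

lemma card_subtype_avoiders {n : ℕ} {b : Fin n → ℕ} {P Q : Perm (Fin n) → Prop}
    (hPQ : ∀ π, P π ↔ Q π) :
    Nat.card {π : avoiders b σ // P π.1} =
      Nat.card {π // IsTransversal b π ∧ ¬ ContainsIn b π σ ∧ Q π} :=
  Nat.card_congr <| (subtypeSubtypeEquivSubtypeInter _ P).trans <|
    subtypeEquivRight fun π => (and_congr_right' (hPQ π)).trans and_assoc

lemma sum_SYcardTop_mul_SYcardLeft_two (b' : Fin (a + 2) → ℕ) (h : 2 ≤ l) (b'' : Fin l → ℕ) :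
    ∑ ρ : Perm (Fin 2), SYcardTop b' σ ρ * SYcardLeft h b'' σ ρ =
      SYcardTopAsc b' σ * SYcardLeftAsc b'' σ + SYcardTopDesc b' σ * SYcardLeftDesc b'' σ := by
  have huniv : (Finset.univ : Finset (Perm (Fin 2))) = {1, swap 0 1} := by decide
  rw [huniv, Finset.sum_pair (by decide)]
  congr 2
  exacts [card_subtype_avoiders topPattern_eq_one_iff,
    card_subtype_avoiders (leftPattern_eq_one_iff h),
    card_subtype_avoiders topPattern_eq_swap_iff,
    card_subtype_avoiders (leftPattern_eq_swap_iff h)]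

end IndexTwo

theorem stmt7_general (n : ℕ) (b : Fin n → ℕ) (hmono : Monotone b)
    (k : ℕ) (σ : Perm (Fin k)) (j r : ℕ) (hr : j + 1 + r ≤ n)
    (hidx : b ⟨j, by omega⟩ = j + 1 + r) :
    SYcard b σ = ∑ ρ : Perm (Fin r),
      SYcardTop (fun t : Fin (j + 1 + r) => min (b ⟨t, by omega⟩) (j + 1 + r)) σ ρ *
        SYcardLeft (Nat.le_sub_of_add_le' hr)
          (fun s : Fin (n - (j + 1)) => b ⟨j + 1 + s, by omega⟩ - (j + 1)) σ ρ := by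
  have hlow (y : Fin n) (hy : (y : ℕ) < j + 1) : b y ≤ j + 1 + r :=
    (hmono (Fin.le_def.2 (Nat.le_of_lt_succ hy))).trans_eq hidx
  have hhigh (y : Fin n) (hy : j + 1 ≤ (y : ℕ)) : j + 1 + r ≤ b y :=
    hidx.symm.trans_le (hmono (Fin.le_def.2 (Nat.le_of_succ_le hy)))
  exact SYcard_eq_sum_of_add_eq (Nat.add_sub_of_le (by omega)) hr hlow hhigh

theorem stmt7 (n : ℕ) (b : Fin n → ℕ) (hmono : Monotone b)
    (hb : ∀ y : Fin n, (y : ℕ) + 1 ≤ b y ∧ b y ≤ n)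
    (k : ℕ) (σ : Equiv.Perm (Fin k))
    (j : ℕ) (hj : j + 1 < n)
    (hcrit : b ⟨j, Nat.lt_of_succ_lt hj⟩ < b ⟨j + 1, hj⟩)
    (hidx : b ⟨j, Nat.lt_of_succ_lt hj⟩ = j + 3) :
    SYcard b σ =
      SYcardTopAsc (fun t : Fin (j + 3) => min (b ⟨(t : ℕ), by
          have h1 := t.isLt
          have h2 := (hb ⟨j, Nat.lt_of_succ_lt hj⟩).2
          omega⟩) (j + 3)) σ *
        SYcardLeftAsc (fun s : Fin (n - (j + 1)) =>
          b ⟨(j + 1) + (s : ℕ), by have := s.isLt; omega⟩ - (j + 1)) σ +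
      SYcardTopDesc (fun t : Fin (j + 3) => min (b ⟨(t : ℕ), by
          have h1 := t.isLt
          have h2 := (hb ⟨j, Nat.lt_of_succ_lt hj⟩).2
          omega⟩) (j + 3)) σ *
        SYcardLeftDesc (fun s : Fin (n - (j + 1)) =>
          b ⟨(j + 1) + (s : ℕ), by have := s.isLt; omega⟩ - (j + 1)) σ := by
  have hr : j + 1 + 2 ≤ n := hidx ▸ (hb _).2
  exact (stmt7_general n b hmono k σ j 2 hr hidx).trans (sum_SYcardTop_mul_SYcardLeft_two _ _ _)
end
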